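/- arXiv:1604.00416 — 5 statements merged into one kernel-verified Lean document; each statement's English description precedes it below -/
import Mathlib

section
/- Coincidence of screw functions of a canonical system up to a linear term (Statement 4.1°): Let H be a Hamiltonian on [0,ℓ) as in the context, let 0 < l < ℓ and suppose a(l) := ∫₀^l √(det H(x)) dx > 0. If τ₁ and τ₂ are spectral measures of the canonical system on [0,l] and g_{τ₁}, g_{τ₂} are corresponding screw (transfer) functions, then there exists β ∈ ℝ such that g_{τ₁}(t) − g_{τ₂}(t) = iβt for all t ∈ [0,2a(l)]. -/
open MeasureTheory Set

/-- The symplectic matrix `J = [[0,-1],[1,0]]` (over `ℂ`). -/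
def Jmat : Matrix (Fin 2) (Fin 2) ℂ := !![0, -1; 1, 0]

/-- Membership of `x` in the interval `[0, ℓ)`, where `0 < ℓ ≤ ∞`. -/
def InDom (ℓ : ENNReal) (x : ℝ) : Prop := 0 ≤ x ∧ ENNReal.ofReal x < ℓ

/-- A Nevanlinna function: holomorphic on `ℂ∖ℝ`, symmetric w.r.t. conjugation,
with nonnegative imaginary part on the upper half-plane. -/
def IsNevanlinna (γ : ℂ → ℂ) : Prop :=
  DifferentiableOn ℂ γ {z : ℂ | z.im ≠ 0} ∧
  (∀ z : ℂ, z.im ≠ 0 → γ (starRingEnd ℂ z) = starRingEnd ℂ (γ z)) ∧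
  (∀ z : ℂ, 0 < z.im → 0 ≤ (γ z).im)

/-- The Herglotz (Nevanlinna) integral representation
`α + βz + ∫_ℝ (1/(λ-z) - λ/(1+λ²)) dτ(λ)`. -/
noncomputable def herglotzFn (τ : Measure ℝ) (α β : ℝ) (z : ℂ) : ℂ :=
  (α : ℂ) + (β : ℂ) * z +
    ∫ lam : ℝ, (1 / ((lam : ℂ) - z) - (lam : ℂ) / (1 + (lam : ℂ) ^ 2)) ∂τ

/-- `W(·;z)` is the (continuous, matrix-valued) solution on `[0,l]` of
`W(x;z) = I₂ - z ∫₀ˣ W(s;z) H(s) J ds`, i.e. `W'(x;z)J = zW(x;z)H(x)`, `W(0;z) = I₂`. -/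
def IsFundamentalSolution (l : ℝ) (H : ℝ → Matrix (Fin 2) (Fin 2) ℝ)
    (W : ℂ → ℝ → Matrix (Fin 2) (Fin 2) ℂ) : Prop :=
  (∀ (z : ℂ) (i j : Fin 2), ContinuousOn (fun x => W z x i j) (Icc 0 l)) ∧
  ∀ (z : ℂ), ∀ x ∈ Icc (0:ℝ) l, ∀ i j : Fin 2,
    W z x i j = (1 : Matrix (Fin 2) (Fin 2) ℂ) i j -
      z * ∫ s in (0:ℝ)..x, (W z s * (H s).map (fun r => (r : ℂ)) * Jmat) i j

/-- `τ` is a spectral measure of the canonical system on `[0,l]` with fundamental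
solution values `Wl z = W(l;z)`: it satisfies `∫ dτ/(1+λ²) < ∞` and for some
Nevanlinna parameter `γ` (or `γ ≡ ∞`) the Weyl–Titchmarsh fraction admits the
Herglotz representation with measure `τ`. -/
def IsCanSpectralMeasure (Wl : ℂ → Matrix (Fin 2) (Fin 2) ℂ) (τ : Measure ℝ) : Prop :=
  (∫⁻ lam : ℝ, ENNReal.ofReal (1 / (1 + lam ^ 2)) ∂τ < ⊤) ∧
  ((∃ γ : ℂ → ℂ, IsNevanlinna γ ∧ ∃ α β : ℝ, 0 ≤ β ∧ ∀ z : ℂ, z.im ≠ 0 →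
      (Wl z 0 0 * γ z + Wl z 0 1) / (Wl z 1 0 * γ z + Wl z 1 1) = herglotzFn τ α β z) ∨
   (∃ α β : ℝ, 0 ≤ β ∧ ∀ z : ℂ, z.im ≠ 0 →
      Wl z 0 0 / Wl z 1 0 = herglotzFn τ α β z))

/-- The kernel `e(λ,t) = (e^{iλt} - 1 - iλt/(1+λ²))/λ²` for `λ ≠ 0`,
and `e(0,t) = -t²/2`. -/
noncomputable def eker (lam t : ℝ) : ℂ :=
  if lam = 0 then -(t ^ 2) / 2
  else (Complex.exp (Complex.I * lam * t) - 1 -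
          Complex.I * lam * t / (1 + (lam : ℂ) ^ 2)) / (lam : ℂ) ^ 2

namespace ScrewAux

lemma ac_primitive {f : ℝ → ℂ} {l : ℝ} (hf : IntervalIntegrable f volume 0 l) :
    AbsolutelyContinuousOnInterval (fun x => ∫ s in (0:ℝ)..x, f s) 0 l := by
  have hre : IntervalIntegrable (fun x => (f x).re) volume 0 l :=
    ⟨hf.1.re, hf.2.re⟩
  have him : IntervalIntegrable (fun x => (f x).im) volume 0 l :=
    ⟨hf.1.im, hf.2.im⟩
  have h1 := hre.absolutelyContinuousOnInterval_intervalIntegral (c := 0) (by simp)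
  have h2 := him.absolutelyContinuousOnInterval_intervalIntegral (c := 0) (by simp)
  have c1 : AbsolutelyContinuousOnInterval (fun _ : ℝ => (1:ℂ)) 0 l :=
    ContDiffOn.absolutelyContinuousOnInterval contDiffOn_const
  have c2 : AbsolutelyContinuousOnInterval (fun _ : ℝ => Complex.I) 0 l :=
    ContDiffOn.absolutelyContinuousOnInterval contDiffOn_const
  have h3 := (h1.smul c1).add (h2.smul c2)
  have key : ∀ x ∈ uIcc 0 l, ((fun x ↦ ∫ v in (0:ℝ)..x, (f v).re) • (fun _ : ℝ => (1:ℂ)) + 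
      (fun x ↦ ∫ v in (0:ℝ)..x, (f v).im) • (fun _ : ℝ => Complex.I)) x = ∫ s in (0:ℝ)..x, f s := by
    intro x hx
    have hfx : IntervalIntegrable f volume 0 x :=
      hf.mono_set (uIcc_subset_uIcc left_mem_uIcc hx)
    have e1 : (∫ v in (0:ℝ)..x, (f v).re) = (∫ s in (0:ℝ)..x, f s).re :=
      Complex.reCLM.intervalIntegral_comp_comm hfx
    have e2 : (∫ v in (0:ℝ)..x, (f v).im) = (∫ s in (0:ℝ)..x, f s).im :=
      Complex.imCLM.intervalIntegral_comp_comm hfx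
    simp only [Pi.add_apply, Pi.smul_apply', e1, e2]
    simp [Complex.re_add_im]
  rw [absolutelyContinuousOnInterval_iff] at h3 ⊢
  intro ε hε
  obtain ⟨δ, hδ, h⟩ := h3 ε hε
  refine ⟨δ, hδ, fun E hE hl => ?_⟩
  have := h E hE hl
  refine lt_of_eq_of_lt (Finset.sum_congr rfl fun i hi => ?_) this
  have hm := hE.1 i hi
  rw [key _ hm.1, key _ hm.2]

lemma prod_rule {f g : ℝ → ℂ} {l : ℝ} (hf : IntervalIntegrable f volume 0 l)
    (hg : IntervalIntegrable g volume 0 l) (F G : ℝ → ℂ) (hl : 0 ≤ l)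
    (hF : ∀ x ∈ Icc 0 l, F x = F 0 + ∫ s in (0:ℝ)..x, f s)
    (hG : ∀ x ∈ Icc 0 l, G x = G 0 + ∫ s in (0:ℝ)..x, g s) :
    ∀ x ∈ Icc 0 l, F x * G x = F 0 * G 0 + ∫ s in (0:ℝ)..x, (f s * G s + F s * g s) := by
  set F1 : ℝ → ℂ := fun x => F 0 + ∫ s in (0:ℝ)..x, f s with hF1
  set G1 : ℝ → ℂ := fun x => G 0 + ∫ s in (0:ℝ)..x, g s with hG1
  have cA : ∀ c : ℂ, AbsolutelyContinuousOnInterval (fun _ : ℝ => c) 0 l := fun c =>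
    ContDiffOn.absolutelyContinuousOnInterval contDiffOn_const
  have aF : AbsolutelyContinuousOnInterval F1 0 l := (cA _).add (ac_primitive hf)
  have aG : AbsolutelyContinuousOnInterval G1 0 l := (cA _).add (ac_primitive hg)
  have hh : IntervalIntegrable (fun s => f s * G1 s + F1 s * g s) volume 0 l :=
    (hf.mul_continuousOn aG.continuousOn).add (hg.continuousOn_mul aF.continuousOn)
  have aP : AbsolutelyContinuousOnInterval
      (F1 • G1 - fun x => ∫ s in (0:ℝ)..x, (f s * G1 s + F1 s * g s)) 0 l :=
    (aF.smul aG).sub (ac_primitive hh)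
  have hd : ∀ᵐ x, x ∈ uIcc 0 l → HasDerivAt
      (F1 • G1 - fun x => ∫ s in (0:ℝ)..x, (f s * G1 s + F1 s * g s)) 0 x := by
    filter_upwards [hf.ae_hasDerivAt_integral, hg.ae_hasDerivAt_integral,
      hh.ae_hasDerivAt_integral] with x h1 h2 h3 hx
    have d1 : HasDerivAt F1 (f x) x := (h1 hx 0 (by simp)).const_add _
    have d2 : HasDerivAt G1 (g x) x := (h2 hx 0 (by simp)).const_add _
    have := (d1.mul d2).sub (h3 hx 0 (by simp))
    exact this.congr_deriv (sub_self _)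
  obtain ⟨C, hC⟩ := aP.const_of_ae_hasDerivAt_zero hd
  intro x hx
  have h0 := hC 0 (by simp)
  have hx' := hC x (by rwa [uIcc_of_le hl])
  simp only [Pi.sub_apply, smul_eq_mul] at h0 hx'
  have e : ∫ s in (0:ℝ)..x, (f s * G s + F s * g s) = ∫ s in (0:ℝ)..x, (f s * G1 s + F1 s * g s) := by
    apply intervalIntegral.integral_congr
    intro s hs
    rw [uIcc_of_le hx.1] at hs
    have : s ∈ Icc 0 l := ⟨hs.1, hs.2.trans hx.2⟩
    simp only [hF s this, hG s this, hF1, hG1]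
  rw [e, hF x hx, hG x hx]
  simp [hF1, hG1] at h0 hx' ⊢
  rw [← h0] at hx'
  linear_combination hx'

structure Sol (l : ℝ) (p q r : ℝ → ℝ) (z : ℂ) (u0 u1 : ℝ → ℂ) : Prop where
  c0 : ContinuousOn u0 (Icc 0 l)
  c1 : ContinuousOn u1 (Icc 0 l)
  e0 : ∀ x ∈ Icc 0 l, u0 x = u0 0 + ∫ s in (0:ℝ)..x, (-z) * (u0 s * q s + u1 s * r s)
  e1 : ∀ x ∈ Icc 0 l, u1 x = u1 0 + ∫ s in (0:ℝ)..x, z * (u0 s * p s + u1 s * q s)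

/-- Hypotheses on the Hamiltonian. -/
structure Ham (l : ℝ) (p q r : ℝ → ℝ) : Prop where
  hl : 0 < l
  ip : IntervalIntegrable p volume 0 l
  iq : IntervalIntegrable q volume 0 l
  ir : IntervalIntegrable r volume 0 l
  is : IntervalIntegrable (fun x => Real.sqrt (p x * r x - q x ^ 2)) volume 0 l
  psd : ∀ᵐ x ∂volume.restrict (Icc 0 l), 0 ≤ p x ∧ 0 ≤ r x ∧ q x ^ 2 ≤ p x * r x

variable {l : ℝ} {p q r : ℝ → ℝ}

lemma ofReal_ii {f : ℝ → ℝ} {a b : ℝ} (h : IntervalIntegrable f volume a b) :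
    IntervalIntegrable (fun x => (f x : ℂ)) volume a b := ⟨h.1.ofReal, h.2.ofReal⟩

lemma mul_ii (hl : 0 < l) {f : ℝ → ℝ} {u : ℝ → ℂ} (h : IntervalIntegrable f volume 0 l)
    (hu : ContinuousOn u (Icc 0 l)) : IntervalIntegrable (fun x => u x * f x) volume 0 l :=
  (ofReal_ii h).continuousOn_mul (by rwa [uIcc_of_le hl.le])

lemma sol_pair (hH : Ham l p q r) {z z' : ℂ} {u0 u1 v0 v1 : ℝ → ℂ}
    (hu : Sol l p q r z u0 u1) (hv : Sol l p q r z' v0 v1) :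
    ∀ x ∈ Icc 0 l, u1 x * v0 x - u0 x * v1 x = u1 0 * v0 0 - u0 0 * v1 0 +
      (z - z') * ∫ s in (0:ℝ)..x, (u0 s * v0 s * p s + (u0 s * v1 s + u1 s * v0 s) * q s +
        u1 s * v1 s * r s) := by
  intro x hx
  have iu0 : IntervalIntegrable (fun s => (-z) * (u0 s * q s + u1 s * r s)) volume 0 l :=
    ((mul_ii hH.hl hH.iq hu.c0).add (mul_ii hH.hl hH.ir hu.c1)).const_mul _
  have iu1 : IntervalIntegrable (fun s => z * (u0 s * p s + u1 s * q s)) volume 0 l :=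
    ((mul_ii hH.hl hH.ip hu.c0).add (mul_ii hH.hl hH.iq hu.c1)).const_mul _
  have iv0 : IntervalIntegrable (fun s => (-z') * (v0 s * q s + v1 s * r s)) volume 0 l :=
    ((mul_ii hH.hl hH.iq hv.c0).add (mul_ii hH.hl hH.ir hv.c1)).const_mul _
  have iv1 : IntervalIntegrable (fun s => z' * (v0 s * p s + v1 s * q s)) volume 0 l :=
    ((mul_ii hH.hl hH.ip hv.c0).add (mul_ii hH.hl hH.iq hv.c1)).const_mul _
  have P1 := prod_rule iu1 iv0 u1 v0 hH.hl.le hu.e1 hv.e0 x hx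
  have P2 := prod_rule iu0 iv1 u0 v1 hH.hl.le hu.e0 hv.e1 x hx
  have sub : uIcc 0 x ⊆ uIcc 0 l := by
    rw [uIcc_of_le hx.1, uIcc_of_le hH.hl.le]; exact Icc_subset_Icc_right hx.2
  have cc : ∀ {w : ℝ → ℂ}, ContinuousOn w (Icc 0 l) → ContinuousOn w (uIcc 0 x) := fun h =>
    h.mono (by rw [uIcc_of_le hx.1]; exact Icc_subset_Icc_right hx.2)
  rw [P1, P2, ← intervalIntegral.integral_const_mul]
  have I1 : IntervalIntegrable (fun s => z * (u0 s * p s + u1 s * q s) * v0 s +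
      u1 s * (-z' * (v0 s * q s + v1 s * r s))) volume 0 x :=
    ((iu1.mono_set sub).mul_continuousOn (cc hv.c0)).add
      ((iv0.mono_set sub).continuousOn_mul (cc hu.c1))
  have I2 : IntervalIntegrable (fun s => -z * (u0 s * q s + u1 s * r s) * v1 s +
      u0 s * (z' * (v0 s * p s + v1 s * q s))) volume 0 x :=
    ((iu0.mono_set sub).mul_continuousOn (cc hv.c1)).add
      ((iv1.mono_set sub).continuousOn_mul (cc hu.c0))
  have := intervalIntegral.integral_sub I1 I2
  have e : (∫ s in (0:ℝ)..x, (z - z') * (u0 s * v0 s * p s + (u0 s * v1 s + u1 s * v0 s) * q s +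
        u1 s * v1 s * r s)) = _ := (intervalIntegral.integral_congr (fun s _ => by
          ring_nf)).trans this
  rw [e]
  ring

lemma conj_ii (f : ℝ → ℂ) (a b : ℝ) :
    starRingEnd ℂ (∫ s in a..b, f s) = ∫ s in a..b, starRingEnd ℂ (f s) := by
  simp only [intervalIntegral, map_sub, integral_conj]

lemma Sol.conj {z : ℂ} {u0 u1 : ℝ → ℂ} (hu : Sol l p q r z u0 u1) :
    Sol l p q r (starRingEnd ℂ z) (fun x => starRingEnd ℂ (u0 x)) (fun x => starRingEnd ℂ (u1 x)) where
  c0 := Complex.continuous_conj.comp_continuousOn hu.c0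
  c1 := Complex.continuous_conj.comp_continuousOn hu.c1
  e0 := by
    intro x hx
    rw [hu.e0 x hx, map_add, conj_ii]
    simp
  e1 := by
    intro x hx
    rw [hu.e1 x hx, map_add, conj_ii]
    simp

lemma Sol.comb (hH : Ham l p q r) {z : ℂ} {u0 u1 v0 v1 : ℝ → ℂ} (c : ℂ)
    (hu : Sol l p q r z u0 u1) (hv : Sol l p q r z v0 v1) :
    Sol l p q r z (fun x => u0 x - c * v0 x) (fun x => u1 x - c * v1 x) where
  c0 := hu.c0.sub (continuousOn_const.mul hv.c0)
  c1 := hu.c1.sub (continuousOn_const.mul hv.c1)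
  e0 := by
    intro x hx
    have sub : uIcc 0 x ⊆ uIcc 0 l := by
      rw [uIcc_of_le hx.1, uIcc_of_le hH.hl.le]; exact Icc_subset_Icc_right hx.2
    have iu0 : IntervalIntegrable (fun s => (-z) * (u0 s * q s + u1 s * r s)) volume 0 l :=
      ((mul_ii hH.hl hH.iq hu.c0).add (mul_ii hH.hl hH.ir hu.c1)).const_mul _
    have iv0 : IntervalIntegrable (fun s => c * ((-z) * (v0 s * q s + v1 s * r s))) volume 0 l :=
      (((mul_ii hH.hl hH.iq hv.c0).add (mul_ii hH.hl hH.ir hv.c1)).const_mul _).const_mul _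
    have := intervalIntegral.integral_sub (iu0.mono_set sub) (iv0.mono_set sub)
    rw [intervalIntegral.integral_const_mul c] at this
    rw [hu.e0 x hx, hv.e0 x hx]
    rw [show (∫ s in (0:ℝ)..x, -z * ((u0 s - c * v0 s) * q s + (u1 s - c * v1 s) * r s)) = _ from
      (intervalIntegral.integral_congr (fun s _ => by ring_nf)).trans this]
    ring
  e1 := by
    intro x hx
    have sub : uIcc 0 x ⊆ uIcc 0 l := by
      rw [uIcc_of_le hx.1, uIcc_of_le hH.hl.le]; exact Icc_subset_Icc_right hx.2
    have iu0 : IntervalIntegrable (fun s => z * (u0 s * p s + u1 s * q s)) volume 0 l :=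
      ((mul_ii hH.hl hH.ip hu.c0).add (mul_ii hH.hl hH.iq hu.c1)).const_mul _
    have iv0 : IntervalIntegrable (fun s => c * (z * (v0 s * p s + v1 s * q s))) volume 0 l :=
      (((mul_ii hH.hl hH.ip hv.c0).add (mul_ii hH.hl hH.iq hv.c1)).const_mul _).const_mul _
    have := intervalIntegral.integral_sub (iu0.mono_set sub) (iv0.mono_set sub)
    rw [intervalIntegral.integral_const_mul c] at this
    rw [hu.e1 x hx, hv.e1 x hx]
    rw [show (∫ s in (0:ℝ)..x, z * ((u0 s - c * v0 s) * p s + (u1 s - c * v1 s) * q s)) = _ from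
      (intervalIntegral.integral_congr (fun s _ => by ring_nf)).trans this]
    ring

end ScrewAux

namespace ScrewAux
variable {l : ℝ} {p q r : ℝ → ℝ}

/-- energy density `u H u*` -/
noncomputable def En (p q r : ℝ → ℝ) (u0 u1 : ℝ → ℂ) (s : ℝ) : ℝ :=
  Complex.normSq (u0 s) * p s + 2 * (u0 s * starRingEnd ℂ (u1 s)).re * q s +
    Complex.normSq (u1 s) * r s

noncomputable def aF (p q r : ℝ → ℝ) (x : ℝ) : ℝ :=
  ∫ s in (0:ℝ)..x, Real.sqrt (p s * r s - q s ^ 2)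

noncomputable def Dv (u0 u1 : ℝ → ℂ) (x : ℝ) : ℝ := (u1 x * starRingEnd ℂ (u0 x)).im

lemma En_ii (hH : Ham l p q r) {u0 u1 : ℝ → ℂ} (c0 : ContinuousOn u0 (Icc 0 l))
    (c1 : ContinuousOn u1 (Icc 0 l)) : IntervalIntegrable (En p q r u0 u1) volume 0 l := by
  have hu : uIcc 0 l = Icc 0 l := uIcc_of_le hH.hl.le
  unfold En
  refine ((hH.ip.continuousOn_mul ?_).add (hH.iq.continuousOn_mul ?_)).add
    (hH.ir.continuousOn_mul ?_)
  · rw [hu]; exact Complex.continuous_normSq.comp_continuousOn c0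
  · rw [hu]
    exact continuousOn_const.mul (Complex.continuous_re.comp_continuousOn
      (c0.mul (Complex.continuous_conj.comp_continuousOn c1)))
  · rw [hu]; exact Complex.continuous_normSq.comp_continuousOn c1

lemma sub_ii {f : ℝ → ℝ} {a b : ℝ} (hf : IntervalIntegrable f volume 0 l) (ha : 0 ≤ a)
    (hab : a ≤ b) (hb : b ≤ l) : IntervalIntegrable f volume a b :=
  hf.mono_set (by
    rw [uIcc_of_le hab, uIcc_of_le (ha.trans (hab.trans hb))]; exact Icc_subset_Icc ha hb)

lemma energy (hH : Ham l p q r) {y : ℝ} {u0 u1 : ℝ → ℂ}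
    (hu : Sol l p q r (Complex.I * y) u0 u1) :
    ∀ x ∈ Icc 0 l, Dv u0 u1 x = Dv u0 u1 0 + y * ∫ s in (0:ℝ)..x, En p q r u0 u1 s := by
  intro x hx
  have h := sol_pair hH hu hu.conj x hx
  have e : ∫ s in (0:ℝ)..x, (u0 s * starRingEnd ℂ (u0 s) * p s + (u0 s * starRingEnd ℂ (u1 s)
      + u1 s * starRingEnd ℂ (u0 s)) * q s + u1 s * starRingEnd ℂ (u1 s) * r s) =
      ((∫ s in (0:ℝ)..x, En p q r u0 u1 s : ℝ) : ℂ) := by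
    rw [← intervalIntegral.integral_ofReal]
    apply intervalIntegral.integral_congr
    intro s _
    simp only [En]
    apply Complex.ext <;> simp [Complex.normSq_apply] <;> first | ring1 | (ring_nf; simp)
  rw [e] at h
  have h2 := congrArg Complex.im h
  simp only [Dv]
  simp at h2 ⊢
  linarith

lemma En_nonneg (hH : Ham l p q r) (u0 u1 : ℝ → ℂ) :
    ∀ᵐ x ∂volume.restrict (Icc 0 l), 0 ≤ En p q r u0 u1 x := by
  filter_upwards [hH.psd] with x ⟨h1, h2, h3⟩
  unfold En
  generalize u0 x = a, u1 x = b, p x = p, q x = q, r x = r at *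
  simp only [Complex.normSq_apply, Complex.mul_re, Complex.conj_re, Complex.conj_im]
  have key : ∀ s t : ℝ, 0 ≤ s * s * p + 2 * (s * t) * q + t * t * r := by
    intro s t
    rcases h1.eq_or_lt with h | h
    · rw [← h] at h3 ⊢
      have : q = 0 := by nlinarith
      rw [this]; nlinarith [mul_self_nonneg t]
    · have : 0 ≤ p * (s * s * p + 2 * (s * t) * q + t * t * r) := by
        nlinarith [sq_nonneg (s * p + t * q), mul_self_nonneg t, sq_nonneg t]
      exact nonneg_of_mul_nonneg_right this h
  nlinarith [key a.re b.re, key a.im b.im]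

lemma gram (u0 u1 v0 v1 : ℂ) (p q r : ℝ) :
    (p * r - q ^ 2) * Complex.normSq (u0 * v1 - u1 * v0) ≤
    (Complex.normSq u0 * p + 2 * (u0 * starRingEnd ℂ u1).re * q + Complex.normSq u1 * r) *
    (Complex.normSq v0 * p + 2 * (v0 * starRingEnd ℂ v1).re * q + Complex.normSq v1 * r) := by
  have : (Complex.normSq u0 * p + 2 * (u0 * starRingEnd ℂ u1).re * q + Complex.normSq u1 * r) *
    (Complex.normSq v0 * p + 2 * (v0 * starRingEnd ℂ v1).re * q + Complex.normSq v1 * r) =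
    (p * r - q ^ 2) * Complex.normSq (u0 * v1 - u1 * v0) + Complex.normSq
     (u0 * starRingEnd ℂ v0 * p + (u0 * starRingEnd ℂ v1 + u1 * starRingEnd ℂ v0) * q +
      u1 * starRingEnd ℂ v1 * r) := by
    simp only [Complex.normSq_apply]
    simp
    ring
  rw [this]
  linarith [Complex.normSq_nonneg (u0 * starRingEnd ℂ v0 * p +
    (u0 * starRingEnd ℂ v1 + u1 * starRingEnd ℂ v0) * q + u1 * starRingEnd ℂ v1 * r)]

lemma En_ge (hH : Ham l p q r) (u0 u1 : ℝ → ℂ) :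
    ∀ᵐ x ∂volume.restrict (Icc 0 l),
      2 * Real.sqrt (p x * r x - q x ^ 2) * |Dv u0 u1 x| ≤ En p q r u0 u1 x := by
  filter_upwards [hH.psd, En_nonneg hH u0 u1] with x ⟨h1, h2, h3⟩ h4
  have g := gram (u0 x) (u1 x) (starRingEnd ℂ (u0 x)) (starRingEnd ℂ (u1 x)) (p x) (q x) (r x)
  have e1 : Complex.normSq (u0 x * starRingEnd ℂ (u1 x) - u1 x * starRingEnd ℂ (u0 x))
      = (2 * |Dv u0 u1 x|) ^ 2 := by
    rw [mul_pow, sq_abs]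
    simp only [Dv, Complex.normSq_apply]
    simp
    ring
  have e2 : Complex.normSq (starRingEnd ℂ (u0 x)) * p x + 2 * (starRingEnd ℂ (u0 x) *
     starRingEnd ℂ (starRingEnd ℂ (u1 x))).re * q x + Complex.normSq (starRingEnd ℂ (u1 x)) * r x
     = En p q r u0 u1 x := by
    simp [En]
  rw [e1, e2] at g
  change _ ≤ En p q r u0 u1 x * _ at g
  apply le_of_sq_le_sq _ h4
  calc _ = (Real.sqrt (p x * r x - q x ^ 2)) ^ 2 * (2 * |Dv u0 u1 x|) ^ 2 := by ring
    _ = (p x * r x - q x ^ 2) * (2 * |Dv u0 u1 x|) ^ 2 := by rw [Real.sq_sqrt (by linarith)]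
    _ ≤ _ := by rw [sq (En p q r u0 u1 x)]; exact g

lemma En_pair (hH : Ham l p q r) (u0 u1 v0 v1 : ℝ → ℂ) {t : ℝ} (ht : 0 < t)
    (hd : ∀ x ∈ Icc 0 l, Complex.normSq (u0 x * v1 x - u1 x * v0 x) = 1) :
    ∀ᵐ x ∂volume.restrict (Icc 0 l),
      2 * Real.sqrt (p x * r x - q x ^ 2) ≤ t * En p q r u0 u1 x + t⁻¹ * En p q r v0 v1 x := by
  filter_upwards [hH.psd, En_nonneg hH u0 u1, En_nonneg hH v0 v1,
    ae_restrict_mem measurableSet_Icc] with x ⟨h1, h2, h3⟩ h4 h5 hx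
  have g := gram (u0 x) (u1 x) (v0 x) (v1 x) (p x) (q x) (r x)
  rw [hd x hx, mul_one] at g
  change _ ≤ En p q r u0 u1 x * En p q r v0 v1 x at g
  apply le_of_sq_le_sq _ (by positivity)
  rw [mul_pow, Real.sq_sqrt (by linarith)]
  have : t * t⁻¹ = 1 := mul_inv_cancel₀ ht.ne'
  nlinarith [sq_nonneg (t * En p q r u0 u1 x - t⁻¹ * En p q r v0 v1 x)]

lemma aF_sub (hH : Ham l p q r) {a b : ℝ} (ha : 0 ≤ a) (hab : a ≤ b) (hb : b ≤ l) :
    aF p q r b - aF p q r a = ∫ s in a..b, Real.sqrt (p s * r s - q s ^ 2) :=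
  intervalIntegral.integral_interval_sub_left (sub_ii hH.is le_rfl (ha.trans hab) hb)
    (sub_ii hH.is le_rfl ha (hab.trans hb))

lemma aF_cont (hH : Ham l p q r) : ContinuousOn (aF p q r) (Icc 0 l) := by
  have := intervalIntegral.continuousOn_primitive_interval' hH.is (a := 0) (by simp)
  rwa [uIcc_of_le hH.hl.le] at this

/-- `∫ E_w ≥ a(x)^2/K` -/
lemma lower (hH : Ham l p q r) {u0 u1 v0 v1 : ℝ → ℂ} (cu0 : ContinuousOn u0 (Icc 0 l))
    (cu1 : ContinuousOn u1 (Icc 0 l)) (cv0 : ContinuousOn v0 (Icc 0 l))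
    (cv1 : ContinuousOn v1 (Icc 0 l))
    (hd : ∀ x ∈ Icc 0 l, Complex.normSq (u0 x * v1 x - u1 x * v0 x) = 1)
    {x K : ℝ} (hx : x ∈ Icc 0 l) (hK : 0 < K) (hE : ∫ s in (0:ℝ)..x, En p q r u0 u1 s ≤ K)
    (ha : 0 < aF p q r x) : aF p q r x ^ 2 / K ≤ ∫ s in (0:ℝ)..x, En p q r v0 v1 s := by
  set a := aF p q r x with hadef
  have ht : 0 < a / K := by positivity
  have iu := sub_ii (En_ii hH cu0 cu1) le_rfl hx.1 hx.2
  have iv := sub_ii (En_ii hH cv0 cv1) le_rfl hx.1 hx.2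
  have is := sub_ii hH.is le_rfl hx.1 hx.2
  have := intervalIntegral.integral_mono_ae_restrict hx.1 (is.const_mul 2)
    ((iu.const_mul (a / K)).add (iv.const_mul (a / K)⁻¹))
    (ae_restrict_of_ae_restrict_of_subset (Icc_subset_Icc_right hx.2)
      (En_pair hH u0 u1 v0 v1 ht hd))
  rw [intervalIntegral.integral_add (iu.const_mul _) (iv.const_mul _)] at this
  simp only [intervalIntegral.integral_const_mul] at this
  change 2 * a ≤ _ at this
  have h1 : a / K * (∫ s in (0:ℝ)..x, En p q r u0 u1 s) ≤ a := by
    calc _ ≤ a / K * K := by gcongr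
      _ = a := by field_simp
  have h2 : a ≤ (a / K)⁻¹ * ∫ s in (0:ℝ)..x, En p q r v0 v1 s := by linarith
  rw [inv_mul_eq_div, le_div_iff₀ ht] at h2
  calc a ^ 2 / K = a * (a / K) := by ring
    _ ≤ _ := h2

lemma growth_step (hH : Ham l p q r) {y : ℝ} (hy : 0 < y) {u0 u1 : ℝ → ℂ}
    (hu : Sol l p q r (Complex.I * y) u0 u1) (h0 : Dv u0 u1 0 = 0) :
    (∀ x ∈ Icc 0 l, 0 ≤ Dv u0 u1 x) ∧ ∀ a b, 0 ≤ a → a ≤ b → b ≤ l →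
      Dv u0 u1 a * (1 + 2 * y * (aF p q r b - aF p q r a)) ≤ Dv u0 u1 b := by
  have iE := En_ii hH hu.c0 hu.c1
  have hdiff : ∀ a b, 0 ≤ a → a ≤ b → b ≤ l → Dv u0 u1 b - Dv u0 u1 a =
      y * ∫ s in a..b, En p q r u0 u1 s := by
    intro a b ha hab hb
    rw [energy hH hu b ⟨ha.trans hab, hb⟩, energy hH hu a ⟨ha, hab.trans hb⟩,
      ← intervalIntegral.integral_interval_sub_left (sub_ii iE le_rfl (ha.trans hab) hb)
      (sub_ii iE le_rfl ha (hab.trans hb))]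
    ring
  have hmono : ∀ a b, 0 ≤ a → a ≤ b → b ≤ l → Dv u0 u1 a ≤ Dv u0 u1 b := by
    intro a b ha hab hb
    have : 0 ≤ ∫ s in a..b, En p q r u0 u1 s :=
      intervalIntegral.integral_nonneg_of_ae_restrict hab
        (ae_restrict_of_ae_restrict_of_subset (Icc_subset_Icc ha hb) (En_nonneg hH u0 u1))
    have := mul_nonneg hy.le this
    linarith [hdiff a b ha hab hb]
  have hnn : ∀ x ∈ Icc 0 l, 0 ≤ Dv u0 u1 x := fun x hx => by
    have := hmono 0 x le_rfl hx.1 hx.2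
    linarith
  refine ⟨hnn, fun a b ha hab hb => ?_⟩
  have is := sub_ii hH.is ha hab hb
  have := intervalIntegral.integral_mono_ae_restrict hab (is.const_mul (2 * Dv u0 u1 a))
    (sub_ii iE ha hab hb) (by
      filter_upwards [ae_restrict_of_ae_restrict_of_subset (Icc_subset_Icc ha hb) (En_ge hH u0 u1),
        ae_restrict_mem measurableSet_Icc] with x hx hm
      refine le_trans ?_ hx
      have h1 := hmono a x ha hm.1 (hm.2.trans hb)
      have h2 := le_abs_self (Dv u0 u1 x)
      have h3 := Real.sqrt_nonneg (p x * r x - q x ^ 2)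
      nlinarith)
  rw [intervalIntegral.integral_const_mul, ← aF_sub hH ha hab hb] at this
  have := mul_le_mul_of_nonneg_left this hy.le
  linarith [hdiff a b ha hab hb]

lemma growth (hH : Ham l p q r) {y : ℝ} (hy : 0 < y) {u0 u1 : ℝ → ℂ}
    (hu : Sol l p q r (Complex.I * y) u0 u1) (h0 : Dv u0 u1 0 = 0) {x0 : ℝ}
    (hx0 : x0 ∈ Icc 0 l) (hA : 0 ≤ aF p q r l - aF p q r x0) :
    Dv u0 u1 x0 * Real.exp (2 * y * (aF p q r l - aF p q r x0)) ≤ Dv u0 u1 l := by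
  obtain ⟨hnn, hst⟩ := growth_step hH hy hu h0
  set A := aF p q r l - aF p q r x0 with hAdef
  have key : ∀ δ : ℝ, 0 ≤ δ → ∀ k : ℕ, ∀ x ∈ Icc x0 l, k * δ ≤ aF p q r x - aF p q r x0 →
      Dv u0 u1 x0 * (1 + 2 * y * δ) ^ k ≤ Dv u0 u1 x := by
    intro δ hδ k
    induction k with
    | zero =>
      intro x hx h
      simp only [Nat.cast_zero, zero_mul] at h
      have := hst x0 x hx0.1 hx.1 hx.2
      have h1 := hnn x0 hx0
      have : 0 ≤ Dv u0 u1 x0 * (2 * y * (aF p q r x - aF p q r x0)) := by positivity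
      simp only [pow_zero]
      linarith
    | succ k ih =>
      intro x hx h
      push_cast at h
      have hc : ContinuousOn (aF p q r) (Icc x0 x) :=
        (aF_cont hH).mono (Icc_subset_Icc hx0.1 hx.2)
      have hk : 0 ≤ (k:ℝ) * δ := by positivity
      obtain ⟨x', hx', he⟩ := intermediate_value_Icc hx.1 hc
        (show aF p q r x0 + k * δ ∈ Icc (aF p q r x0) (aF p q r x) from
          ⟨by linarith, by linarith⟩)
      have h1 := ih x' ⟨hx'.1, hx'.2.trans hx.2⟩ (by linarith)
      have h2 := hst x' x (hx0.1.trans hx'.1) hx'.2 hx.2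
      have h3 := hnn x' ⟨hx0.1.trans hx'.1, hx'.2.trans hx.2⟩
      calc _ = (Dv u0 u1 x0 * (1 + 2 * y * δ) ^ k) * (1 + 2 * y * δ) := by ring
        _ ≤ Dv u0 u1 x' * (1 + 2 * y * δ) := by gcongr
        _ ≤ Dv u0 u1 x' * (1 + 2 * y * (aF p q r x - aF p q r x')) := by
          gcongr; linarith
        _ ≤ _ := h2
  have lim := (Real.tendsto_one_add_div_pow_exp (2 * y * A)).const_mul (Dv u0 u1 x0)
  refine le_of_tendsto lim ?_
  filter_upwards [Filter.eventually_gt_atTop 0] with n hn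
  have hn' : (0:ℝ) < n := by exact_mod_cast hn
  have := key (A / n) (by positivity) n l ⟨hx0.2, le_rfl⟩ (by
    rw [mul_div_cancel₀ _ hn'.ne'])
  rwa [mul_div_assoc]

end ScrewAux

namespace ScrewAux
variable {l : ℝ} {p q r : ℝ → ℝ}

lemma disc {a b c d Q : ℂ} (hdet : a * d - b * c = 1)
    (hQ : ((b - Q * d) * starRingEnd ℂ (a - Q * c)).im ≤ 0)
    (hD : 0 < (d * starRingEnd ℂ c).im) :
    ‖2 * (d * starRingEnd ℂ c).im * Q -
      Complex.I * starRingEnd ℂ (d * starRingEnd ℂ a - starRingEnd ℂ b * c)‖ ≤ 1 := by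
  have h : Complex.normSq (2 * (d * starRingEnd ℂ c).im * Q -
      Complex.I * starRingEnd ℂ (d * starRingEnd ℂ a - starRingEnd ℂ b * c)) =
      4 * (d * starRingEnd ℂ c).im * ((b - Q * d) * starRingEnd ℂ (a - Q * c)).im +
      Complex.normSq (a * d - b * c) := by
    simp only [Complex.normSq_apply]
    simp
    ring
  rw [hdet] at h
  have h2 : Complex.normSq (2 * (d * starRingEnd ℂ c).im * Q -
      Complex.I * starRingEnd ℂ (d * starRingEnd ℂ a - starRingEnd ℂ b * c)) ≤ 1 := by
    rw [h, map_one]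
    nlinarith
  rw [Complex.normSq_eq_norm_sq] at h2
  exact (sq_le_one_iff₀ (norm_nonneg _)).1 h2

/-- `Q` is in the Weyl disc. -/
def IsW (a b c d Q : ℂ) : Prop :=
  (∃ γ : ℂ, 0 ≤ γ.im ∧ Q = (a * γ + b) / (c * γ + d)) ∨ Q = a / c

lemma IsW.im_le {a b c d Q : ℂ} (h : IsW a b c d Q) (hdet : a * d - b * c = 1)
    (hD : 0 < (d * starRingEnd ℂ c).im) :
    ((b - Q * d) * starRingEnd ℂ (a - Q * c)).im ≤ 0 := by
  rcases h with ⟨γ, hγ, rfl⟩ | rfl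
  · have hN : c * γ + d ≠ 0 := by
      intro h0
      have : d = - (c * γ) := by linear_combination h0
      rw [this] at hD
      have e : (-(c * γ) * starRingEnd ℂ c).im = - (Complex.normSq c * γ.im) := by
        simp [Complex.normSq_apply]; ring
      rw [e] at hD
      have := mul_nonneg (Complex.normSq_nonneg c) hγ
      linarith
    have e1 : a - (a * γ + b) / (c * γ + d) * c = 1 / (c * γ + d) := by
      rw [eq_div_iff hN, sub_mul, div_mul_eq_mul_div, div_mul_cancel₀ _ hN]
      linear_combination hdet
    have e2 : b - (a * γ + b) / (c * γ + d) * d = - γ * (1 / (c * γ + d)) := by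
      rw [mul_one_div, eq_div_iff hN, sub_mul, div_mul_eq_mul_div, div_mul_cancel₀ _ hN]
      linear_combination (-γ) * hdet
    rw [e1, e2, mul_assoc, Complex.mul_conj]
    simp only [Complex.im_mul_ofReal, Complex.neg_im]
    have := mul_nonneg hγ (Complex.normSq_nonneg (1 / (c * γ + d)))
    linarith
  · have hc : c ≠ 0 := by rintro rfl; simp at hD
    have e1 : a - a / c * c = 0 := by field_simp; ring
    rw [e1]; simp

lemma weyl_bound (hH : Ham l p q r) {y : ℝ} (hy : 0 < y) {a b c d : ℝ → ℂ}
    (h1 : Sol l p q r (Complex.I * y) a b) (h2 : Sol l p q r (Complex.I * y) c d)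
    (ha : a 0 = 1) (hb : b 0 = 0) (hc : c 0 = 0) (hd : d 0 = 1)
    {ε K : ℝ} (hε : 0 < ε) (hεa : ε ≤ aF p q r l) (hK : 0 < K) {Q1 Q2 : ℂ}
    (hQ1 : IsW (a l) (b l) (c l) (d l) Q1) (hQ2 : IsW (a l) (b l) (c l) (d l) Q2)
    (hQK : Q1.im ≤ K * y) :
    ‖Q1 - Q2‖ ≤ K / (y * ε ^ 2) * Real.exp (-(2 * y * (aF p q r l - ε))) := by
  have hll : l ∈ Icc 0 l := ⟨hH.hl.le, le_rfl⟩
  have h00 : (0:ℝ) ∈ Icc 0 l := ⟨le_rfl, hH.hl.le⟩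
  have hdet : ∀ x ∈ Icc 0 l, a x * d x - b x * c x = 1 := by
    intro x hx
    have := sol_pair hH h1 h2 x hx
    rw [sub_self, zero_mul, add_zero, ha, hb, hc, hd] at this
    linear_combination -this
  have hD0 : Dv c d 0 = 0 := by simp [Dv, hc]
  have hDE : ∀ x ∈ Icc 0 l, Dv c d x = y * ∫ s in (0:ℝ)..x, En p q r c d s := by
    intro x hx
    rw [energy hH h2 x hx, hD0, zero_add]
  obtain ⟨x0, hx0, hax0⟩ := intermediate_value_Icc hH.hl.le (aF_cont hH)
    (show ε ∈ Icc (aF p q r 0) (aF p q r l) from ⟨by simp [aF, hε.le], hεa⟩)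
  have hal : 0 < aF p q r l := hε.trans_le hεa
  -- positivity of D(l)
  have hDl : 0 < Dv c d l := by
    have hnn : 0 ≤ ∫ s in (0:ℝ)..l, En p q r a b s :=
      intervalIntegral.integral_nonneg_of_ae_restrict hH.hl.le (En_nonneg hH a b)
    have := lower hH h1.c0 h1.c1 h2.c0 h2.c1 (fun x hx => by rw [hdet x hx]; simp) hll
      (show 0 < (∫ s in (0:ℝ)..l, En p q r a b s) + 1 by linarith) (by linarith) hal
    rw [hDE l hll]
    have h3 : 0 < aF p q r l ^ 2 / ((∫ s in (0:ℝ)..l, En p q r a b s) + 1) := by positivity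
    have := h3.trans_le this
    positivity
  have w1 := hQ1.im_le (hdet l hll) hDl
  have w2 := hQ2.im_le (hdet l hll) hDl
  -- energy of the Weyl solution
  have hχ := Sol.comb hH Q1 h1 h2
  have hχE : ∫ s in (0:ℝ)..x0, En p q r (fun x => a x - Q1 * c x) (fun x => b x - Q1 * d x) s ≤ K := by
    have e := energy hH hχ l hll
    have hEn := En_nonneg hH (fun x => a x - Q1 * c x) (fun x => b x - Q1 * d x)
    have hi := En_ii hH hχ.c0 hχ.c1
    have hsplit := intervalIntegral.integral_interval_sub_left (sub_ii hi le_rfl hH.hl.le le_rfl)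
      (sub_ii hi le_rfl hx0.1 hx0.2)
    have hpos : 0 ≤ ∫ s in x0..l, En p q r (fun x => a x - Q1 * c x) (fun x => b x - Q1 * d x) s :=
      intervalIntegral.integral_nonneg_of_ae_restrict hx0.2
        (ae_restrict_of_ae_restrict_of_subset (Icc_subset_Icc_left hx0.1) hEn)
    have e0 : Dv (fun x => a x - Q1 * c x) (fun x => b x - Q1 * d x) 0 = - Q1.im := by
      simp [Dv, ha, hb, hc, hd]
    rw [e0] at e
    have w1' : Dv (fun x => a x - Q1 * c x) (fun x => b x - Q1 * d x) l ≤ 0 := w1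
    have : y * ∫ s in (0:ℝ)..l, En p q r (fun x => a x - Q1 * c x) (fun x => b x - Q1 * d x) s
      ≤ y * K := by linarith
    have := le_of_mul_le_mul_left this hy
    linarith
  have hlow := lower hH hχ.c0 hχ.c1 h2.c0 h2.c1 (fun x hx => by
    rw [show (a x - Q1 * c x) * d x - (b x - Q1 * d x) * c x = a x * d x - b x * c x by ring,
      hdet x hx]; simp) hx0 hK hχE (by rw [hax0]; exact hε)
  rw [hax0] at hlow
  have hDx0 : y * (ε ^ 2 / K) ≤ Dv c d x0 := by
    rw [hDE x0 hx0]; gcongr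
  have hg := growth hH hy h2 hD0 hx0 (by rw [hax0]; linarith)
  rw [hax0] at hg
  have hfin : y * (ε ^ 2 / K) * Real.exp (2 * y * (aF p q r l - ε)) ≤ Dv c d l :=
    le_trans (by gcongr) hg
  have d1 := disc (hdet l hll) w1 hDl
  have d2 := disc (hdet l hll) w2 hDl
  change ‖2 * (Dv c d l : ℂ) * Q1 - _‖ ≤ 1 at d1
  change ‖2 * (Dv c d l : ℂ) * Q2 - _‖ ≤ 1 at d2
  have d3 : ‖2 * (Dv c d l : ℂ) * (Q1 - Q2)‖ ≤ 2 := by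
    have := norm_sub_le_of_le d1 d2
    rw [sub_sub_sub_cancel_right, ← mul_sub] at this
    linarith
  rw [norm_mul, norm_mul, Complex.norm_real, Complex.norm_two, Real.norm_eq_abs,
    abs_of_pos hDl] at d3
  have d4 : Dv c d l * ‖Q1 - Q2‖ ≤ 1 := by linarith
  have d5 : y * (ε ^ 2 / K) * Real.exp (2 * y * (aF p q r l - ε)) * ‖Q1 - Q2‖ ≤ 1 :=
    le_trans (by gcongr) d4
  have hP : 0 < y * (ε ^ 2 / K) * Real.exp (2 * y * (aF p q r l - ε)) := by positivity
  have d6 : ‖Q1 - Q2‖ ≤ (y * (ε ^ 2 / K) * Real.exp (2 * y * (aF p q r l - ε)))⁻¹ := by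
    rw [← one_div, le_div_iff₀ hP, mul_comm]; exact d5
  refine d6.trans_eq ?_
  rw [Real.exp_neg]
  field_simp

end ScrewAux

namespace ScrewAux

open Filter Topology in
lemma entire_int {f : ℝ → ℂ} (hf : Continuous f) (T : ℝ) :
    Differentiable ℂ (fun z : ℂ => ∫ s in (0:ℝ)..T, f s * Complex.exp (z * s)) := by
  intro z0
  have := (intervalIntegral.hasDerivAt_integral_of_dominated_loc_of_deriv_le
    (μ := volume) (a := 0) (b := T)
    (F := fun z s => f s * Complex.exp (z * s))
    (F' := fun z s => f s * (Complex.exp (z * s) * s)) (x₀ := z0)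
    (bound := fun s => ‖f s‖ * (Real.exp ((‖z0‖ + 1) * |s|) * |s|))
    (Metric.ball_mem_nhds z0 one_pos) ?_ ?_ ?_ ?_ ?_ ?_).2.differentiableAt
  · exact this
  · refine Eventually.of_forall fun z => ?_
    exact (Continuous.aestronglyMeasurable (by fun_prop))
  · exact Continuous.intervalIntegrable (by fun_prop) _ _
  · exact (Continuous.aestronglyMeasurable (by fun_prop))
  · refine Eventually.of_forall fun t _ z hz => ?_
    rw [norm_mul, norm_mul]
    have h1 : ‖z‖ ≤ ‖z0‖ + 1 := by
      have : ‖z - z0‖ < 1 := by simpa [dist_eq_norm] using hz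
      have := norm_sub_norm_le z z0
      linarith
    have h2 : ‖Complex.exp (z * t)‖ ≤ Real.exp ((‖z0‖ + 1) * |t|) := by
      refine (Complex.norm_exp_le_exp_norm _).trans ?_
      rw [norm_mul, Complex.norm_real, Real.norm_eq_abs]
      gcongr
    rw [Complex.norm_real, Real.norm_eq_abs]
    gcongr
  · exact Continuous.intervalIntegrable (by fun_prop) _ _
  · refine Eventually.of_forall fun t _ z hz => ?_
    have h : HasDerivAt (fun z : ℂ => z * (t:ℂ)) (t:ℂ) z := by
      simpa using (hasDerivAt_id z).mul_const (t:ℂ)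
    exact h.cexp.const_mul (f t)

open Filter Topology in
lemma zero_of_int_exp {f : ℝ → ℂ} (hf : Continuous f) {T : ℝ} (hT : 0 < T)
    (h : ∀ z : ℂ, ∫ s in (0:ℝ)..T, f s * Complex.exp (z * s) = 0) :
    ∀ s ∈ Ioo 0 T, f s = 0 := by
  intro s hs
  set g : ℝ → ℂ := (Ioc 0 T).indicator f with hg
  have hgi : Integrable g := by
    rw [hg, integrable_indicator_iff measurableSet_Ioc]
    exact (hf.intervalIntegrable 0 T).1
  have hF : FourierTransform.fourier g = fun _ => (0:ℂ) := by
    funext w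
    rw [Real.fourier_eq']
    have := h (-2 * Real.pi * w * Complex.I)
    rw [intervalIntegral.integral_of_le hT.le] at this
    rw [← this, ← integral_indicator measurableSet_Ioc]
    congr 1
    funext v
    by_cases hv : v ∈ Ioc 0 T
    · simp only [hg, indicator_of_mem hv, smul_eq_mul]
      rw [mul_comm]
      congr 2
      simp
      ring
    · simp [hg, indicator_of_notMem hv]
  have hc : ContinuousAt g s := by
    refine hf.continuousAt.congr ?_
    filter_upwards [Ioo_mem_nhds hs.1 hs.2] with x hx
    rw [hg, indicator_of_mem (Ioo_subset_Ioc_self hx)]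
  have := hgi.fourierInv_fourier_eq (by rw [hF]; exact integrable_zero _ _ _) hc
  rw [hF, hg, indicator_of_mem (Ioo_subset_Ioc_self hs)] at this
  rw [← this, Real.fourierInv_eq']
  simp

open Filter Topology in
lemma int_exp_zero {f : ℝ → ℂ} (hf : Continuous f) {T : ℝ} (hT : 0 < T) {C : ℝ}
    (h : ∀ x : ℝ, 2 ≤ x → ‖∫ s in (0:ℝ)..T, f s * Complex.exp (x * s)‖ ≤ C) (z : ℂ) :
    ∫ s in (0:ℝ)..T, f s * Complex.exp (z * s) = 0 := by
  set Φ : ℂ → ℂ := fun z => ∫ s in (0:ℝ)..T, f s * Complex.exp (z * s) with hΦ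
  have hd : Differentiable ℂ Φ := entire_int hf T
  obtain ⟨M, hM⟩ := isCompact_Icc.exists_bound_of_continuousOn (hf.continuousOn (s := Icc 0 T))
  have hM0 : 0 ≤ M := (norm_nonneg _).trans (hM 0 ⟨le_rfl, hT.le⟩)
  have hb : ∀ z : ℂ, ∀ N : ℝ, (∀ s ∈ Icc 0 T, z.re * s ≤ N) → ‖Φ z‖ ≤ M * Real.exp N * T := by
    intro z N hN
    have := intervalIntegral.norm_integral_le_of_norm_le_const (a := 0) (b := T)
      (f := fun s : ℝ => f s * Complex.exp (z * s)) (C := M * Real.exp N) ?_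
    · simpa [abs_of_pos hT] using this
    · intro s hs
      rw [uIoc_of_le hT.le] at hs
      have hs' := Ioc_subset_Icc_self hs
      rw [norm_mul, Complex.norm_exp]
      have : (z * s).re = z.re * s := by simp
      rw [this]
      gcongr
      · exact hM s hs'
      · exact hN s hs'
  have hleft : ∀ z : ℂ, z.re ≤ 0 → ‖Φ z‖ ≤ M * T := by
    intro z hz
    have := hb z 0 fun s hs => mul_nonpos_of_nonpos_of_nonneg hz hs.1
    simpa using this
  have hright : ∀ z : ℂ, 0 ≤ z.re → ‖Φ z‖ ≤ M * T := by
    intro z hz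
    refine PhragmenLindelof.right_half_plane_of_bounded_on_real hd.diffContOnCl
      ⟨1, by norm_num, T, ?_⟩ ?_ ?_ hz
    · refine Asymptotics.IsBigO.of_bound (M * T) (Eventually.of_forall fun w => ?_)
      have := hb w (T * ‖w‖) fun s hs => by
        have h1 : w.re ≤ ‖w‖ := Complex.re_le_norm w
        nlinarith [hs.1, hs.2, norm_nonneg w]
      rw [Real.norm_eq_abs, abs_of_pos (Real.exp_pos _), Real.rpow_one]
      linarith
    · exact ⟨C, eventually_map.2 ((eventually_ge_atTop 2).mono fun x hx => h x hx)⟩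
    · intro x
      exact hleft _ (by simp)
  have hbd : Bornology.IsBounded (range Φ) := by
    refine isBounded_iff_forall_norm_le.2 ⟨M * T, ?_⟩
    rintro _ ⟨w, rfl⟩
    rcases le_total w.re 0 with hw | hw
    · exact hleft w hw
    · exact hright w hw
  have hconst := fun w => hd.apply_eq_apply_of_bounded hbd z w
  have hle : ∀ x : ℝ, 0 < x → ‖Φ z‖ ≤ M / x := by
    intro x hx
    rw [hconst (-(x:ℂ))]
    have h1 : ‖Φ (-(x:ℂ))‖ ≤ ∫ s in (0:ℝ)..T, M * Real.exp (-x * s) := by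
      refine intervalIntegral.norm_integral_le_of_norm_le hT.le ?_ ?_
      · refine Eventually.of_forall fun s hs => ?_
        rw [norm_mul, Complex.norm_exp]
        have : (-(x:ℂ) * s).re = -x * s := by simp
        rw [this]
        gcongr
        exact hM s (Ioc_subset_Icc_self hs)
      · exact Continuous.intervalIntegrable (by fun_prop) _ _
    refine h1.trans ?_
    rw [intervalIntegral.integral_const_mul, intervalIntegral.integral_of_le hT.le]
    have h2 : ∫ s in Ioc 0 T, Real.exp (-x * s) ≤ ∫ s in Ioi (0:ℝ), Real.exp (-x * s) :=
      setIntegral_mono_set (integrableOn_exp_mul_Ioi (by linarith) 0)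
        (Eventually.of_forall fun s => (Real.exp_pos _).le)
        (LE.le.eventuallyLE Ioc_subset_Ioi_self)
    rw [integral_exp_mul_Ioi (by linarith)] at h2
    calc M * ∫ s in Ioc 0 T, Real.exp (-x * s) ≤ M * (-Real.exp (-x * 0) / -x) := by gcongr
      _ = M / x := by rw [neg_div_neg_eq]; simp; rfl
  by_contra hne
  have hpos : 0 < ‖Φ z‖ := norm_pos_iff.2 hne
  have := hle ((M + 1) / ‖Φ z‖) (by positivity)
  rw [div_div_eq_mul_div, le_div_iff₀ (by positivity)] at this
  nlinarith

open Filter Topology in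
lemma laplace_unique {F : ℝ → ℂ} (hF : Continuous F) {T : ℝ} (hT : 0 < T) {C : ℝ}
    (hb : ∀ t, 0 ≤ t → ‖F t‖ ≤ C * Real.exp t)
    (h : ∀ y : ℝ, 2 ≤ y → ‖∫ t in Ioi (0:ℝ), F t * Complex.exp (-(y * t))‖
      ≤ C * Real.exp (-(T * y))) :
    ∀ t ∈ Icc 0 T, F t = 0 := by
  have hC : 0 ≤ C := by
    have := (norm_nonneg _).trans (hb 0 le_rfl)
    simpa using this
  have hint : ∀ y : ℝ, 2 ≤ y → ∀ a : ℝ, 0 ≤ a →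
      IntegrableOn (fun t => F t * Complex.exp (-(y * t))) (Ioi a) ∧
      ‖∫ t in Ioi a, F t * Complex.exp (-(y * t))‖ ≤ C * Real.exp (-(y - 1) * a) := by
    intro y hy a ha
    have hi : IntegrableOn (fun t : ℝ => C * Real.exp (-(y-1) * t)) (Ioi a) :=
      (integrableOn_exp_mul_Ioi (by linarith) a).const_mul C
    have hle : ∀ᵐ t ∂(volume.restrict (Ioi a)),
        ‖F t * Complex.exp (-(y * t))‖ ≤ C * Real.exp (-(y-1) * t) := by
      refine (ae_restrict_mem measurableSet_Ioi).mono fun t ht => ?_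
      have ht0 : 0 ≤ t := ha.trans (le_of_lt ht)
      rw [norm_mul, Complex.norm_exp]
      have e1 : (-((y:ℂ) * t)).re = -(y * t) := by simp
      rw [e1]
      calc ‖F t‖ * Real.exp (-(y*t)) ≤ C * Real.exp t * Real.exp (-(y*t)) := by
            gcongr; exact hb t ht0
        _ = _ := by rw [mul_assoc, ← Real.exp_add]; ring_nf
    refine ⟨hi.mono' (Continuous.aestronglyMeasurable (by fun_prop)) hle, ?_⟩
    refine (norm_integral_le_of_norm_le hi hle).trans ?_
    rw [integral_const_mul, integral_exp_mul_Ioi (by linarith)]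
    gcongr
    rw [neg_div_neg_eq]
    exact div_le_self (Real.exp_pos _).le (by linarith)
  have key : ∀ x : ℝ, 2 ≤ x →
      ‖∫ s in (0:ℝ)..T, F (T - s) * Complex.exp (x * s)‖ ≤ C + C * Real.exp T := by
    intro x hx
    have e1 : ∫ s in (0:ℝ)..T, F (T - s) * Complex.exp (x * s) =
        Complex.exp (x * T) * ∫ t in (0:ℝ)..T, F t * Complex.exp (-(x * t)) := by
      have := intervalIntegral.integral_comp_sub_left (a := 0) (b := T)
        (fun t : ℝ => F t * Complex.exp (x * (T - t))) T
      rw [sub_self, sub_zero] at this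
      rw [← intervalIntegral.integral_const_mul]
      refine Eq.trans ?_ (this.trans ?_)
      · refine intervalIntegral.integral_congr fun s _ => ?_
        simp
      · refine intervalIntegral.integral_congr fun s _ => ?_
        rw [mul_sub, sub_eq_add_neg, Complex.exp_add]; ring
    have e2 : ∫ t in (0:ℝ)..T, F t * Complex.exp (-(x * t)) =
        (∫ t in Ioi (0:ℝ), F t * Complex.exp (-(x * t))) -
        ∫ t in Ioi T, F t * Complex.exp (-(x * t)) := by
      rw [← intervalIntegral.integral_Ioi_sub_Ioi (hint x hx 0 le_rfl).1 hT.le]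
    have hn : ‖Complex.exp (x * T)‖ = Real.exp (T * x) := by
      rw [Complex.norm_exp]; simp [mul_comm]
    rw [e1, norm_mul, hn, e2]
    calc Real.exp (T * x) * _ ≤ Real.exp (T * x) *
          (C * Real.exp (-(T * x)) + C * Real.exp (-(x - 1) * T)) := by
          gcongr
          refine (norm_sub_le _ _).trans (add_le_add (h x hx) (hint x hx T hT.le).2)
      _ = C * (Real.exp (T * x) * Real.exp (-(T * x))) +
          C * (Real.exp (T * x) * Real.exp (-(x - 1) * T)) := by ring
      _ = _ := by
          rw [← Real.exp_add, ← Real.exp_add]; ring_nf; simp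
  have hz := zero_of_int_exp (f := fun s => F (T - s)) (by fun_prop) hT
    (int_exp_zero (by fun_prop) hT key)
  have hoo : ∀ t ∈ Ioo 0 T, F t = 0 := by
    intro t ht
    have := hz (T - t) ⟨by linarith [ht.2], by linarith [ht.1]⟩
    simpa using this
  have hcl : IsClosed {t | F t = 0} := isClosed_eq hF continuous_const
  intro t ht
  rw [← closure_Ioo hT.ne] at ht
  exact closure_minimal (fun t ht => hoo t ht) hcl ht

end ScrewAux

namespace ScrewAux

lemma exp_quad_bound (x : ℝ) :
    ‖Complex.exp (Complex.I * x) - 1 - Complex.I * x‖ ≤ 3 * x ^ 2 := by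
  have hn : ‖Complex.I * (x:ℂ)‖ = |x| := by simp
  rcases le_total |x| 1 with h | h
  · have := Complex.norm_exp_sub_one_sub_id_le (x := Complex.I * x) (by rw [hn]; exact h)
    rw [hn, sq_abs] at this
    nlinarith [sq_nonneg x]
  · have h1 : ‖Complex.exp (Complex.I * x) - 1‖ ≤ ‖x‖ := Real.norm_exp_I_mul_ofReal_sub_one_le
    have h2 := norm_sub_le (Complex.exp (Complex.I * x) - 1) (Complex.I * x)
    rw [hn] at h2
    rw [Real.norm_eq_abs] at h1
    have h3 : |x| ≤ x ^ 2 := by rw [← sq_abs]; nlinarith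
    linarith

lemma norm_one_add_sq (lam : ℝ) : ‖(1 + (lam:ℂ)^2)‖ = 1 + lam^2 := by
  have : (1 + (lam:ℂ)^2) = ((1 + lam^2 : ℝ) : ℂ) := by push_cast; rfl
  rw [this, Complex.norm_real, Real.norm_eq_abs, abs_of_pos (by positivity)]

lemma eker_bound (lam t : ℝ) : ‖eker lam t‖ ≤ 12 * (1 / (1 + lam ^ 2)) * Real.exp |t| := by
  have hq := Real.quadratic_le_exp_of_nonneg (abs_nonneg t)
  rw [sq_abs] at hq
  have hE := Real.exp_pos |t|
  have ht0 := abs_nonneg t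
  have hp : 0 < 1 + lam ^ 2 := by positivity
  have hgoal : ∀ N : ℝ, N * (1 + lam^2) ≤ 12 * Real.exp |t| →
      N ≤ 12 * (1 / (1 + lam ^ 2)) * Real.exp |t| := by
    intro N hN
    rw [mul_one_div, div_mul_eq_mul_div, le_div_iff₀ hp]
    exact hN
  apply hgoal
  unfold eker
  split_ifs with h0
  · subst h0
    have : ‖(-((t:ℂ) ^ 2) / 2)‖ = t^2/2 := by simp
    rw [this]
    nlinarith [sq_nonneg t]
  · have hl2 : 0 < lam^2 := by positivity
    rw [norm_div, norm_pow, Complex.norm_real, Real.norm_eq_abs, sq_abs, div_mul_eq_mul_div,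
      div_le_iff₀ hl2]
    have ne : (1 + (lam:ℂ)^2) ≠ 0 := by
      rw [← norm_pos_iff, norm_one_add_sq]; exact hp
    rcases le_total (lam^2) 1 with h | h
    · have e : Complex.exp (Complex.I * lam * t) - 1 - Complex.I * lam * t / (1 + (lam : ℂ) ^ 2)
        = (Complex.exp (Complex.I * (lam * t : ℝ)) - 1 - Complex.I * (lam * t : ℝ)) +
          Complex.I * lam * t * lam^2 / (1 + (lam : ℂ) ^ 2) := by
        push_cast
        rw [← mul_assoc]
        field_simp
        ring
      rw [e]
      have h1 := exp_quad_bound (lam * t)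
      have h2 : ‖Complex.I * lam * t * lam^2 / (1 + (lam : ℂ) ^ 2)‖ ≤ |t| * lam^2 := by
        rw [norm_div, norm_one_add_sq, div_le_iff₀ hp]
        simp only [norm_mul, norm_pow, Complex.norm_I, Complex.norm_real, Real.norm_eq_abs, sq_abs]
        have : |lam| ≤ 1 := by
          rw [← sq_le_one_iff_abs_le_one]; exact h
        have hh : 0 ≤ |t| * lam^2 := by positivity
        calc 1 * |lam| * |t| * lam^2 = |lam| * (|t| * lam^2) := by ring
          _ ≤ 1 * (|t| * lam^2) := by gcongr
          _ ≤ _ := by nlinarith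
      have h3 := (norm_add_le _ _).trans (add_le_add h1 h2)
      calc _ ≤ (3 * (lam * t)^2 + |t| * lam^2) * (1 + lam^2) := by gcongr
        _ ≤ (3 * (lam * t)^2 + |t| * lam^2) * 2 := by gcongr; linarith
        _ = (6 * t^2 + 2 * |t|) * lam^2 := by ring
        _ ≤ _ := by gcongr; linarith
    · have h1 : ‖Complex.exp (Complex.I * lam * t) - 1 -
          Complex.I * lam * t / (1 + (lam : ℂ) ^ 2)‖ ≤ 1 + 1 + |t| := by
        refine (norm_sub_le _ _).trans (add_le_add ((norm_sub_le _ _).trans (add_le_add ?_ ?_)) ?_)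
        · rw [Complex.norm_exp]; simp
        · simp
        · rw [norm_div, norm_one_add_sq, div_le_iff₀ hp]
          simp only [norm_mul, Complex.norm_I, Complex.norm_real, Real.norm_eq_abs]
          have : |lam| ≤ 1 + lam^2 := by rw [← sq_abs lam]; nlinarith [sq_nonneg (|lam|-1)]
          nlinarith
      calc _ ≤ (1 + 1 + |t|) * (1 + lam^2) := by gcongr
        _ ≤ (1 + 1 + |t|) * (2 * lam^2) := by gcongr; linarith
        _ = (2 * (2 + |t|)) * lam^2 := by ring
        _ ≤ _ := mul_le_mul_of_nonneg_right (by nlinarith [sq_nonneg t]) hl2.le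

lemma eker_meas : Measurable (fun p : ℝ × ℝ => eker p.1 p.2) := by
  unfold eker
  refine Measurable.ite (measurableSet_eq_fun measurable_fst measurable_const) ?_ ?_
  · fun_prop
  · fun_prop

lemma eker_cont (lam : ℝ) : Continuous (fun t => eker lam t) := by
  unfold eker
  split_ifs
  · fun_prop
  · fun_prop

lemma int_pow_exp {y : ℝ} (hy : 0 < y) (n : ℕ) :
    IntegrableOn (fun t : ℝ => (t:ℂ)^n * Complex.exp (-(y*t))) (Ioi 0) ∧
    ∫ t in Ioi (0:ℝ), (t:ℂ)^n * Complex.exp (-(y*t)) = n.factorial / y^(n+1) := by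
  have h := Real.integral_rpow_mul_exp_neg_mul_Ioi (a := n+1) (by positivity) hy
  have e : ∀ t : ℝ, t ^ ((n:ℝ)+1-1) * Real.exp (-(y*t)) = t^n * Real.exp (-(y*t)) := by
    intro t; rw [add_sub_cancel_right, Real.rpow_natCast]
  simp_rw [e] at h
  rw [Real.Gamma_nat_eq_factorial] at h
  have hne : ∫ t in Ioi (0:ℝ), t^n * Real.exp (-(y*t)) ≠ 0 := by
    rw [h]; positivity
  have hi := Integrable.of_integral_ne_zero hne
  have e2 : ∀ t : ℝ, (t:ℂ)^n * Complex.exp (-(y*t)) = ((t^n * Real.exp (-(y*t)) : ℝ) : ℂ) := by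
    intro t; push_cast; rfl
  simp_rw [e2]
  refine ⟨hi.ofReal, ?_⟩
  rw [integral_complex_ofReal, h]
  have : (1/y)^((n:ℝ)+1) = 1 / y^(n+1) := by
    rw [← Nat.cast_succ, Real.rpow_natCast, div_pow, one_pow]
  rw [this]
  push_cast
  ring

lemma eker_laplace {y : ℝ} (hy : 0 < y) (lam : ℝ) :
    ∫ t in Ioi (0:ℝ), eker lam t * Complex.exp (-(y*t)) =
      -(Complex.I / y^2) * (1 / ((lam:ℂ) - (-(Complex.I * y))) - (lam:ℂ) / (1 + (lam:ℂ)^2)) := by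
  have hyc : (y:ℂ) ≠ 0 := by exact_mod_cast hy.ne'
  by_cases h0 : lam = 0
  · subst h0
    have h2 := (int_pow_exp hy 2).2
    have : ∀ t : ℝ, eker 0 t * Complex.exp (-(y*t)) =
        (-1/2) * ((t:ℂ)^2 * Complex.exp (-(y*t))) := by
      intro t; simp only [eker, if_true]; ring
    simp_rw [this]
    rw [integral_const_mul, h2]
    have hI : Complex.I^2 = -1 := Complex.I_sq
    have : Complex.I ≠ 0 := Complex.I_ne_zero
    norm_num
    field_simp
    rw [hI]
  · have hlc : (lam:ℂ) ≠ 0 := by exact_mod_cast h0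
    have ne : (1 + (lam:ℂ)^2) ≠ 0 := by
      rw [← norm_pos_iff, norm_one_add_sq]; positivity
    have i0 := int_pow_exp hy 0
    have i1 := int_pow_exp hy 1
    have hre : (Complex.I * lam - y).re < 0 := by simp [hy]
    have ie := integrableOn_exp_mul_complex_Ioi hre 0
    have ie2 := integral_exp_mul_complex_Ioi hre 0
    have : ∀ t : ℝ, eker lam t * Complex.exp (-(y*t)) =
        (1/(lam:ℂ)^2) * Complex.exp ((Complex.I * lam - y) * t)
        - (1/(lam:ℂ)^2) * ((t:ℂ)^0 * Complex.exp (-(y*t)))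
        - (Complex.I / (lam * (1 + (lam:ℂ)^2))) * ((t:ℂ)^1 * Complex.exp (-(y*t))) := by
      intro t
      have e1 : Complex.exp ((Complex.I * lam - y) * t) =
        Complex.exp (Complex.I * lam * t) * Complex.exp (-(y*t)) := by
        rw [← Complex.exp_add]; ring_nf
      rw [e1]
      simp only [eker, if_neg h0]
      field_simp
    simp_rw [this]
    rw [integral_sub, integral_sub, integral_const_mul, integral_const_mul, integral_const_mul,
      i0.2, i1.2, ie2]
    · have n1 : Complex.I * lam - y ≠ 0 := by
        intro h; rw [h] at hre; simp at hre
      have n2 : (lam:ℂ) - (-(Complex.I * y)) ≠ 0 := by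
        intro h
        have := congrArg Complex.im h
        simp at this
        exact hy.ne' this
      have e3 : (lam:ℂ) - (-(Complex.I * y)) = -Complex.I * (Complex.I * lam - y) := by
        linear_combination ((lam:ℂ)) * Complex.I_sq
      rw [e3]
      have hI := Complex.I_ne_zero
      have hI2 := Complex.I_sq
      simp only [Complex.ofReal_zero, mul_zero, Complex.exp_zero]
      norm_num
      obtain ⟨w, hw⟩ : ∃ w, w = Complex.I * lam - y := ⟨_, rfl⟩
      rw [← hw] at n1 ⊢
      field_simp
      rw [hw]
      ring_nf
    · exact ie.const_mul _
    · exact i0.1.const_mul _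
    · exact (ie.const_mul _).sub (i0.1.const_mul _)
    · exact i1.1.const_mul _

lemma int_of_lint {τ : Measure ℝ} (h : ∫⁻ lam : ℝ, ENNReal.ofReal (1 / (1 + lam ^ 2)) ∂τ < ⊤) :
    Integrable (fun lam : ℝ => 1 / (1 + lam ^ 2)) τ := by
  refine ⟨Measurable.aestronglyMeasurable (by fun_prop), ?_⟩
  rw [hasFiniteIntegral_iff_ofReal (Filter.Eventually.of_forall fun x => by positivity)]
  exact h

lemma sigma_of_int {τ : Measure ℝ} (h : Integrable (fun lam : ℝ => 1 / (1 + lam ^ 2)) τ) :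
    SigmaFinite τ := by
  refine Measure.sigmaFinite_of_countable
    (S := range fun n : ℕ => {x : ℝ | 1 / ((n:ℝ)+1) ≤ ‖1 / (1 + x^2)‖}) (countable_range _) ?_ ?_
  · rintro _ ⟨n, rfl⟩
    exact h.measure_norm_ge_lt_top (by positivity)
  · rw [eq_univ_iff_forall]
    intro x
    have : 0 < ‖1 / (1 + x^2)‖ := by
      rw [norm_pos_iff]; positivity
    obtain ⟨n, hn⟩ := exists_nat_one_div_lt this
    exact mem_sUnion.2 ⟨_, ⟨n, rfl⟩, hn.le⟩

lemma eker_int {τ : Measure ℝ} (h : Integrable (fun lam : ℝ => 1 / (1 + lam ^ 2)) τ) (t : ℝ) :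
    Integrable (fun lam => eker lam t) τ := by
  refine ((h.const_mul 12).mul_const (Real.exp |t|)).mono' ?_ ?_
  · exact (eker_meas.comp (measurable_id.prodMk measurable_const)).aestronglyMeasurable
  · exact Filter.Eventually.of_forall fun lam => eker_bound lam t

lemma screw_cont {τ : Measure ℝ} (h : Integrable (fun lam : ℝ => 1 / (1 + lam ^ 2)) τ) :
    Continuous (fun t => ∫ lam, eker lam t ∂τ) := by
  rw [continuous_iff_continuousAt]
  intro t0
  refine continuousAt_of_dominated (bound := fun lam => 12 * (1 / (1 + lam^2)) * Real.exp (|t0|+1))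
    ?_ ?_ ((h.const_mul 12).mul_const _) ?_
  · exact Filter.Eventually.of_forall fun t => (eker_int h t).aestronglyMeasurable
  · filter_upwards [Metric.ball_mem_nhds t0 one_pos] with t ht
    refine Filter.Eventually.of_forall fun lam => (eker_bound lam t).trans ?_
    have : |t - t0| < 1 := by simpa [Real.dist_eq] using ht
    have := abs_sub_abs_le_abs_sub t t0
    gcongr
    linarith
  · exact Filter.Eventually.of_forall fun lam => (eker_cont lam).continuousAt

lemma screw_bound {τ : Measure ℝ} (h : Integrable (fun lam : ℝ => 1 / (1 + lam ^ 2)) τ) (t : ℝ) :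
    ‖∫ lam, eker lam t ∂τ‖ ≤ 12 * (∫ lam, 1 / (1 + lam^2) ∂τ) * Real.exp |t| := by
  refine (norm_integral_le_of_norm_le ((h.const_mul 12).mul_const (Real.exp |t|))
    (Filter.Eventually.of_forall fun lam => eker_bound lam t)).trans_eq ?_
  rw [integral_mul_const, integral_const_mul]

lemma exp_abs_int {y : ℝ} (hy : 2 ≤ y) :
    IntegrableOn (fun t : ℝ => Real.exp |t| * Real.exp (-(y*t))) (Ioi 0) := by
  have hi : IntegrableOn (fun t : ℝ => Real.exp (-(y-1) * t)) (Ioi 0) :=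
    integrableOn_exp_mul_Ioi (by linarith) 0
  refine hi.congr_fun (fun t ht => ?_) measurableSet_Ioi
  simp only
  rw [abs_of_pos ht, ← Real.exp_add]
  ring_nf

lemma norm_exp_yt (y t : ℝ) : ‖Complex.exp (-(y*t))‖ = Real.exp (-(y*t)) := by
  rw [Complex.norm_exp]; simp

lemma bdd_lap_int {F : ℝ → ℂ} (hF : Continuous F) {C : ℝ} (hb : ∀ t, ‖F t‖ ≤ C * Real.exp |t|)
    {y : ℝ} (hy : 2 ≤ y) : IntegrableOn (fun t => F t * Complex.exp (-(y*t))) (Ioi 0) := by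
  refine ((exp_abs_int hy).const_mul C).mono' (Continuous.aestronglyMeasurable (by fun_prop)) ?_
  refine Filter.Eventually.of_forall fun t => ?_
  rw [norm_mul, norm_exp_yt, ← mul_assoc]
  gcongr
  exact hb t

lemma screw_laplace {τ : Measure ℝ} (h : Integrable (fun lam : ℝ => 1 / (1 + lam ^ 2)) τ)
    (α β : ℝ) {y : ℝ} (hy : 2 ≤ y) :
    ∫ t in Ioi (0:ℝ), (∫ lam, eker lam t ∂τ) * Complex.exp (-(y*t)) =
      -(Complex.I / y^2) * (herglotzFn τ α β (-(Complex.I * y)) - α + β * (Complex.I * y)) := by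
  have := sigma_of_int h
  have hprod : Integrable (Function.uncurry fun (t lam : ℝ) => eker lam t * Complex.exp (-(y*t)))
      ((volume.restrict (Ioi 0)).prod τ) := by
    refine (Integrable.mul_prod (exp_abs_int hy) (h.const_mul 12)).mono' ?_ ?_
    · have m1 : Measurable (fun p : ℝ × ℝ => eker p.2 p.1) := eker_meas.comp measurable_swap
      have m2 : Measurable (fun p : ℝ × ℝ => Complex.exp (-(y*p.1))) := by fun_prop
      exact (m1.mul m2).aestronglyMeasurable
    · refine Filter.Eventually.of_forall fun p => ?_
      simp only [Function.uncurry]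
      rw [norm_mul, norm_exp_yt]
      calc _ ≤ (12 * (1 / (1 + p.2^2)) * Real.exp |p.1|) * Real.exp (-(y*p.1)) := by
            gcongr; exact eker_bound _ _
        _ = _ := by ring
  simp_rw [← integral_mul_const]
  rw [integral_integral_swap hprod]
  simp_rw [eker_laplace (show 0 < y by linarith)]
  rw [integral_const_mul, herglotzFn]
  ring

lemma herglotz_conj (τ : Measure ℝ) (α β y : ℝ) :
    herglotzFn τ α β (-(Complex.I * y)) = starRingEnd ℂ (herglotzFn τ α β (Complex.I * y)) := by
  unfold herglotzFn
  rw [map_add, ← integral_conj]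
  simp

lemma herglotz_im {τ : Measure ℝ} (h : Integrable (fun lam : ℝ => 1 / (1 + lam ^ 2)) τ)
    (α β : ℝ) {y : ℝ} (hy : 2 ≤ y) :
    (herglotzFn τ α β (Complex.I * y)).im ≤ (β + ∫ lam, 1 / (1 + lam^2) ∂τ) * y := by
  have hK : 0 ≤ ∫ lam, 1 / (1 + lam^2) ∂τ := integral_nonneg fun lam => by positivity
  unfold herglotzFn
  set f : ℝ → ℂ := fun lam => 1 / ((lam:ℂ) - Complex.I * y) - (lam:ℂ) / (1 + (lam:ℂ)^2) with hf
  have e : ∀ lam, (f lam).im = y / (lam^2 + y^2) := by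
    intro lam
    have : (lam:ℂ) / (1 + (lam:ℂ)^2) = ((lam / (1 + lam^2) : ℝ) : ℂ) := by push_cast; rfl
    rw [hf]
    simp only
    rw [this, Complex.sub_im, Complex.ofReal_im, sub_zero, one_div, Complex.inv_im]
    simp [Complex.normSq_apply]
    ring
  have hle : (∫ lam, f lam ∂τ).im ≤ (∫ lam, 1 / (1 + lam^2) ∂τ) * y := by
    by_cases hi : Integrable f τ
    · have e2 : (∫ lam, f lam ∂τ).im = ∫ lam, (f lam).im ∂τ := by
        simpa using (integral_im hi).symm
      rw [e2, ← integral_mul_const]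
      refine integral_mono hi.im (h.mul_const y) fun lam => ?_
      have := e lam
      change (f lam).im ≤ _
      rw [this, div_mul_eq_mul_div, one_mul]
      refine div_le_div_of_nonneg_left (by linarith) (by positivity) (by nlinarith)
    · rw [integral_undef hi]
      simp
      positivity
  simp only [Complex.add_im, Complex.ofReal_im, Complex.mul_im, Complex.ofReal_re, Complex.I_re,
    Complex.I_im]
  simp
  simp at hle
  linarith

end ScrewAux

namespace ScrewAux

lemma eker_zero (lam : ℝ) : eker lam 0 = 0 := by
  unfold eker; split_ifs <;> simp

lemma main_analytic {τ₁ τ₂ : Measure ℝ}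
    (h₁ : Integrable (fun lam : ℝ => 1 / (1 + lam ^ 2)) τ₁)
    (h₂ : Integrable (fun lam : ℝ => 1 / (1 + lam ^ 2)) τ₂) (α₁ α₂ c₁ c₂ : ℝ) {a : ℝ} (ha : 0 < a)
    (hQ : ∀ ε : ℝ, 0 < ε → ε < a → ∃ C : ℝ, ∀ y : ℝ, 2 ≤ y →
      ‖herglotzFn τ₁ α₁ c₁ (Complex.I * y) - herglotzFn τ₂ α₂ c₂ (Complex.I * y)‖
        ≤ C * Real.exp (-(2 * y * (a - ε)))) :
    ∀ t ∈ Icc 0 (2 * a), (∫ lam, eker lam t ∂τ₁) - (∫ lam, eker lam t ∂τ₂) =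
      Complex.I * (α₁ - α₂ : ℝ) * t := by
  set F : ℝ → ℂ := fun t => (∫ lam, eker lam t ∂τ₁) - (∫ lam, eker lam t ∂τ₂) -
      Complex.I * (α₁ - α₂ : ℝ) * t - (c₁ - c₂ : ℝ) with hFdef
  have k1 := screw_cont h₁
  have k2 := screw_cont h₂
  have hF : Continuous F := by fun_prop
  set K₁ := ∫ lam, 1 / (1 + lam^2) ∂τ₁ with hK1
  set K₂ := ∫ lam, 1 / (1 + lam^2) ∂τ₂ with hK2
  set D : ℝ := 12 * K₁ + 12 * K₂ + |α₁ - α₂| + |c₁ - c₂| with hD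
  have hFb : ∀ t, 0 ≤ t → ‖F t‖ ≤ D * Real.exp t := by
    intro t ht
    have b1 := screw_bound h₁ t
    have b2 := screw_bound h₂ t
    rw [abs_of_nonneg ht] at b1 b2
    have e1 : t + 1 ≤ Real.exp t := Real.add_one_le_exp t
    have b3 : ‖Complex.I * (α₁ - α₂ : ℝ) * t‖ ≤ |α₁ - α₂| * Real.exp t := by
      rw [norm_mul, norm_mul, Complex.norm_I, Complex.norm_real, Complex.norm_real, one_mul,
        Real.norm_eq_abs, Real.norm_eq_abs, abs_of_nonneg ht]
      gcongr
      linarith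
    have b4 : ‖((c₁ - c₂ : ℝ) : ℂ)‖ ≤ |c₁ - c₂| * Real.exp t := by
      rw [Complex.norm_real, Real.norm_eq_abs]
      exact le_mul_of_one_le_right (abs_nonneg _) (by linarith)
    have := (norm_sub_le _ _).trans (add_le_add ((norm_sub_le _ _).trans
      (add_le_add ((norm_sub_le _ _).trans (add_le_add b1 b2)) b3)) b4)
    refine this.trans_eq ?_
    rw [hD]; ring
  have hL : ∀ y : ℝ, 2 ≤ y → ∫ t in Ioi (0:ℝ), F t * Complex.exp (-(y*t)) =
      -(Complex.I / y^2) * starRingEnd ℂ (herglotzFn τ₁ α₁ c₁ (Complex.I * y) -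
        herglotzFn τ₂ α₂ c₂ (Complex.I * y)) := by
    intro y hy
    have hy0 : 0 < y := by linarith
    have i0 := int_pow_exp hy0 0
    have i1 := int_pow_exp hy0 1
    have j1 := bdd_lap_int k1 (screw_bound h₁) hy
    have j2 := bdd_lap_int k2 (screw_bound h₂) hy
    have e : ∀ t : ℝ, F t * Complex.exp (-(y*t)) =
        (∫ lam, eker lam t ∂τ₁) * Complex.exp (-(y*t)) -
        (∫ lam, eker lam t ∂τ₂) * Complex.exp (-(y*t)) -
        (Complex.I * (α₁ - α₂ : ℝ)) * ((t:ℂ)^1 * Complex.exp (-(y*t))) -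
        ((c₁ - c₂ : ℝ):ℂ) * ((t:ℂ)^0 * Complex.exp (-(y*t))) := by
      intro t; rw [hFdef]; ring
    simp_rw [e]
    rw [integral_sub, integral_sub, integral_sub, integral_const_mul, integral_const_mul,
      i0.2, i1.2, screw_laplace h₁ α₁ c₁ hy, screw_laplace h₂ α₂ c₂ hy, herglotz_conj,
      herglotz_conj, map_sub]
    · have hyc : (y:ℂ) ≠ 0 := by exact_mod_cast hy0.ne'
      push_cast
      norm_num
      field_simp
      ring_nf
      simp only [Complex.I_sq]
      ring
    · exact j1
    · exact j2
    · exact j1.sub j2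
    · exact i1.1.const_mul _
    · exact (j1.sub j2).sub (i1.1.const_mul _)
    · exact i0.1.const_mul _
  have hzero : ∀ t ∈ Ico 0 (2 * a), F t = 0 := by
    intro t ht
    set ε := min (a/2) ((2*a - t)/2) with hε
    have hε0 : 0 < ε := lt_min (by linarith) (by linarith [ht.2])
    have hεa : ε < a := (min_le_left _ _).trans_lt (by linarith)
    have hεt : t ≤ 2 * (a - ε) := by
      have := min_le_right (a/2) ((2*a-t)/2)
      linarith
    obtain ⟨C, hC⟩ := hQ ε hε0 hεa
    refine laplace_unique (T := 2 * (a - ε)) (C := max C D) hF (by linarith) ?_ ?_ t ⟨ht.1, hεt⟩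
    · intro s hs
      refine (hFb s hs).trans ?_
      gcongr
      exact le_max_right _ _
    · intro y hy
      rw [hL y hy, norm_mul, Complex.norm_conj]
      have n1 : ‖-(Complex.I / (y:ℂ)^2)‖ ≤ 1 := by
        rw [norm_neg, norm_div, Complex.norm_I, norm_pow, Complex.norm_real, Real.norm_eq_abs,
          sq_abs, div_le_one (by positivity)]
        nlinarith
      calc _ ≤ 1 * (C * Real.exp (-(2 * y * (a - ε)))) :=
            mul_le_mul n1 (hC y hy) (norm_nonneg _) zero_le_one
        _ ≤ max C D * Real.exp (-(2 * y * (a - ε))) := by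
            rw [one_mul]; gcongr; exact le_max_left _ _
        _ = _ := by ring_nf
  have hzero' : ∀ t ∈ Icc 0 (2 * a), F t = 0 := by
    have hcl : IsClosed {t | F t = 0} := isClosed_eq hF continuous_const
    intro t ht
    rw [← closure_Ico (by linarith : (0:ℝ) ≠ 2 * a)] at ht
    exact closure_minimal (fun t ht => hzero t ht) hcl ht
  have h0 := hzero' 0 ⟨le_rfl, by linarith⟩
  have hc : ((c₁ - c₂ : ℝ) : ℂ) = 0 := by
    simp [hFdef, eker_zero] at h0
    push_cast
    linear_combination -h0
  intro t ht
  have := hzero' t ht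
  simp only [hFdef, hc, sub_zero] at this
  exact sub_eq_zero.1 this

end ScrewAux

namespace ScrewAux

lemma psd_facts {M : Matrix (Fin 2) (Fin 2) ℝ} (h : M.PosSemidef) :
    0 ≤ M 0 0 ∧ 0 ≤ M 1 1 ∧ M 0 1 ^ 2 ≤ M 0 0 * M 1 1 ∧ M 1 0 = M 0 1 := by
  have hs : M 1 0 = M 0 1 := by
    have := h.isHermitian.apply 0 1
    simpa using this
  have hd := h.det_nonneg
  rw [Matrix.det_fin_two, hs] at hd
  exact ⟨h.diag_nonneg, h.diag_nonneg, by linarith [sq (M 0 1)], hs⟩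

lemma spec_unpack {Wl : ℂ → Matrix (Fin 2) (Fin 2) ℂ} {τ : Measure ℝ}
    (h : IsCanSpectralMeasure Wl τ) :
    Integrable (fun lam : ℝ => 1 / (1 + lam ^ 2)) τ ∧ ∃ α β : ℝ, 0 ≤ β ∧ ∀ y : ℝ, 0 < y →
      IsW (Wl (Complex.I * y) 0 0) (Wl (Complex.I * y) 0 1) (Wl (Complex.I * y) 1 0)
        (Wl (Complex.I * y) 1 1) (herglotzFn τ α β (Complex.I * y)) := by
  refine ⟨int_of_lint h.1, ?_⟩
  rcases h.2 with ⟨γ, hγ, α, β, hβ, hz⟩ | ⟨α, β, hβ, hz⟩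
  · refine ⟨α, β, hβ, fun y hy => Or.inl ⟨γ (Complex.I * y), hγ.2.2 _ (by simpa using hy), ?_⟩⟩
    exact (hz _ (by simpa using hy.ne')).symm
  · refine ⟨α, β, hβ, fun y hy => Or.inr ?_⟩
    exact (hz _ (by simpa using hy.ne')).symm

lemma sol_row {l : ℝ} {H : ℝ → Matrix (Fin 2) (Fin 2) ℝ}
    {W : ℂ → ℝ → Matrix (Fin 2) (Fin 2) ℂ} (hW : IsFundamentalSolution l H W) (hl : 0 < l)
    (hs : ∀ᵐ x ∂volume.restrict (Icc 0 l), H x 1 0 = H x 0 1) (z : ℂ) (i : Fin 2) :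
    Sol l (fun x => H x 0 0) (fun x => H x 0 1) (fun x => H x 1 1) z
      (fun x => W z x i 0) (fun x => W z x i 1) ∧ W z 0 i 0 = (1 : Matrix (Fin 2) (Fin 2) ℂ) i 0
      ∧ W z 0 i 1 = (1 : Matrix (Fin 2) (Fin 2) ℂ) i 1 := by
  have h0 : ∀ j, W z 0 i j = (1 : Matrix (Fin 2) (Fin 2) ℂ) i j := by
    intro j
    have := hW.2 z 0 ⟨le_rfl, hl.le⟩ i j
    simpa using this
  refine ⟨⟨hW.1 z i 0, hW.1 z i 1, ?_, ?_⟩, h0 0, h0 1⟩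
  · intro x hx
    have := hW.2 z x hx i 0
    rw [this, h0 0, intervalIntegral.integral_const_mul, neg_mul, ← sub_eq_add_neg]
    congr 2
    refine intervalIntegral.integral_congr fun s _ => ?_
    simp [Jmat, Matrix.mul_apply, Fin.sum_univ_two]
  · intro x hx
    have := hW.2 z x hx i 1
    rw [this, h0 1, intervalIntegral.integral_const_mul, sub_eq_add_neg, ← mul_neg,
      ← intervalIntegral.integral_neg]
    congr 2
    refine intervalIntegral.integral_congr_ae ?_
    rw [ae_restrict_iff' measurableSet_Icc] at hs
    filter_upwards [hs] with s hs hsx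
    rw [uIoc_of_le hx.1] at hsx
    have := hs ⟨hsx.1.le, hsx.2.trans hx.2⟩
    simp [Jmat, Matrix.mul_apply, Fin.sum_univ_two, this]

end ScrewAux

/-- **Coincidence of screw functions of a canonical system up to a linear term**
(Statement 4.1°). If `τ₁, τ₂` are spectral measures of the canonical system on `[0,l]`
and `a(l) = ∫₀^l √(det H(x)) dx > 0`, then any two corresponding screw (transfer)
functions differ on `[0,2a(l)]` only by a term `iβt`. -/
theorem screw_functions_coincide_up_to_linear_term
    (ℓ : ENNReal) (hℓ : 0 < ℓ)
    (H : ℝ → Matrix (Fin 2) (Fin 2) ℝ)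
    (hHmeas : ∀ i j : Fin 2, Measurable fun x => H x i j)
    (hHpsd : ∀ᵐ x ∂volume.restrict {x : ℝ | InDom ℓ x}, (H x).PosSemidef)
    (hHtr : ∀ᵐ x ∂volume.restrict {x : ℝ | InDom ℓ x}, Matrix.trace (H x) = 1)
    (hH22 : ∀ x : ℝ, 0 < x → InDom ℓ x → 0 < ∫ s in (0:ℝ)..x, H s 1 1)
    (l : ℝ) (hl : 0 < l) (hlℓ : ENNReal.ofReal l < ℓ)
    (hal : 0 < ∫ x in (0:ℝ)..l, Real.sqrt (H x).det)
    (W : ℂ → ℝ → Matrix (Fin 2) (Fin 2) ℂ) (hW : IsFundamentalSolution l H W)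
    (τ₁ τ₂ : Measure ℝ)
    (hτ₁ : IsCanSpectralMeasure (fun z => W z l) τ₁)
    (hτ₂ : IsCanSpectralMeasure (fun z => W z l) τ₂)
    (β₁ β₂ : ℝ) (g₁ g₂ : ℝ → ℂ)
    (hg₁ : ∀ t : ℝ, g₁ t = Complex.I * β₁ * t + ∫ lam : ℝ, eker lam t ∂τ₁)
    (hg₂ : ∀ t : ℝ, g₂ t = Complex.I * β₂ * t + ∫ lam : ℝ, eker lam t ∂τ₂) :
    ∃ β : ℝ, ∀ t ∈ Icc (0:ℝ) (2 * ∫ x in (0:ℝ)..l, Real.sqrt (H x).det),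
      g₁ t - g₂ t = Complex.I * β * t := by
  have hsub : Icc 0 l ⊆ {x : ℝ | InDom ℓ x} := fun x hx =>
    ⟨hx.1, (ENNReal.ofReal_le_ofReal hx.2).trans_lt hlℓ⟩
  have hP : ∀ᵐ x ∂volume.restrict (Icc 0 l), (H x).PosSemidef :=
    ae_restrict_of_ae_restrict_of_subset hsub hHpsd
  have hT : ∀ᵐ x ∂volume.restrict (Icc 0 l), Matrix.trace (H x) = 1 :=
    ae_restrict_of_ae_restrict_of_subset hsub hHtr
  have hs : ∀ᵐ x ∂volume.restrict (Icc 0 l), H x 1 0 = H x 0 1 := by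
    filter_upwards [hP] with x hx using (ScrewAux.psd_facts hx).2.2.2
  have hint : ∀ i j, (∀ᵐ x ∂volume.restrict (Icc 0 l), ‖H x i j‖ ≤ 1) →
      IntervalIntegrable (fun x => H x i j) volume 0 l := by
    intro i j hb
    rw [intervalIntegrable_iff_integrableOn_Icc_of_le hl.le]
    exact Integrable.of_bound (hHmeas i j).aestronglyMeasurable 1 hb
  have hdet : (fun x => Real.sqrt (H x).det) =ᵐ[volume.restrict (Icc 0 l)]
      fun x => Real.sqrt (H x 0 0 * H x 1 1 - H x 0 1 ^ 2) := by
    filter_upwards [hs] with x hx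
    rw [Matrix.det_fin_two, hx, sq]
  have haF : ∫ x in (0:ℝ)..l, Real.sqrt (H x).det =
      ScrewAux.aF (fun x => H x 0 0) (fun x => H x 0 1) (fun x => H x 1 1) l := by
    unfold ScrewAux.aF
    rw [intervalIntegral.integral_of_le hl.le, intervalIntegral.integral_of_le hl.le]
    exact integral_congr_ae (ae_restrict_of_ae_restrict_of_subset Ioc_subset_Icc_self hdet)
  rw [haF] at hal ⊢
  set a := ScrewAux.aF (fun x => H x 0 0) (fun x => H x 0 1) (fun x => H x 1 1) l with ha
  have hHam : ScrewAux.Ham l (fun x => H x 0 0) (fun x => H x 0 1) (fun x => H x 1 1) := by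
    refine ⟨hl, hint 0 0 ?_, hint 0 1 ?_, hint 1 1 ?_, ?_, ?_⟩
    · filter_upwards [hP, hT] with x hx ht
      have := ScrewAux.psd_facts hx
      rw [Matrix.trace_fin_two] at ht
      rw [Real.norm_eq_abs, abs_of_nonneg this.1]; linarith [this.2.1]
    · filter_upwards [hP, hT] with x hx ht
      have := ScrewAux.psd_facts hx
      rw [Matrix.trace_fin_two] at ht
      rw [Real.norm_eq_abs, ← sq_le_one_iff_abs_le_one]
      nlinarith [this.1, this.2.1, this.2.2.1]
    · filter_upwards [hP, hT] with x hx ht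
      have := ScrewAux.psd_facts hx
      rw [Matrix.trace_fin_two] at ht
      rw [Real.norm_eq_abs, abs_of_nonneg this.2.1]; linarith [this.1]
    · exact intervalIntegral.intervalIntegrable_of_integral_ne_zero hal.ne'
    · filter_upwards [hP] with x hx
      have := ScrewAux.psd_facts hx
      exact ⟨this.1, this.2.1, this.2.2.1⟩
  obtain ⟨hi₁, α₁, c₁, hc₁, hW₁⟩ := ScrewAux.spec_unpack hτ₁
  obtain ⟨hi₂, α₂, c₂, hc₂, hW₂⟩ := ScrewAux.spec_unpack hτ₂
  have hK0 : 0 ≤ ∫ lam, 1 / (1 + lam^2) ∂τ₁ := integral_nonneg fun lam => by positivity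
  have key := ScrewAux.main_analytic hi₁ hi₂ α₁ α₂ c₁ c₂ hal (by
    intro ε hε hεa
    set K := c₁ + (∫ lam, 1 / (1 + lam^2) ∂τ₁) + 1 with hK
    refine ⟨K / ε^2, fun y hy => ?_⟩
    have hy0 : 0 < y := by linarith
    obtain ⟨s1, s2, s3⟩ := ScrewAux.sol_row hW hl hs (Complex.I * y) 0
    obtain ⟨s4, s5, s6⟩ := ScrewAux.sol_row hW hl hs (Complex.I * y) 1
    have him := ScrewAux.herglotz_im hi₁ α₁ c₁ hy
    have := ScrewAux.weyl_bound (K := K) hHam hy0 s1 s4 (by simpa using s2) (by simpa using s3)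
      (by simpa using s5) (by simpa using s6) hε hεa.le (by linarith) (hW₁ y hy0) (hW₂ y hy0)
      (by rw [hK]; nlinarith)
    refine this.trans ?_
    have hKp : 0 ≤ K := by linarith
    gcongr
    exact le_mul_of_one_le_left (by positivity) (by linarith))
  refine ⟨β₁ - β₂ + (α₁ - α₂), fun t ht => ?_⟩
  have := key t ht
  rw [hg₁, hg₂]
  push_cast at this ⊢
  linear_combination this
end

section
/- The Weyl–Titchmarsh function of a regular Sturm–Liouville problem is a Nevanlinna function (part of Statement 2.1°): Let a > 0, q ∈ L¹(0,a), α ∈ (0,π), and let φ, ψ, φ', ψ' be as in the context. Let γ be a Nevanlinna function or γ ≡ ∞, and define for non-real z: m_γ(z) := (ψ'(a;z) − ψ(a;z)γ(z))/(φ'(a;z) − φ(a;z)γ(z)) (and m_∞(z) := ψ(a;z)/φ(a;z)). Then the denominator does not vanish for z ∈ ℂ∖ℝ, and m_γ is a Nevanlinna function: it is holomorphic on ℂ∖ℝ, satisfies m_γ(conj z) = conj(m_γ(z)), and Im m_γ(z) ≥ 0 for Im z > 0. -/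
open MeasureTheory Set

/-- `u` is, for each `z ∈ ℂ`, the continuous solution on `[0,a]` of the Volterra
integral equation `u(x;z) = c₀ + c₁·x + ∫₀ˣ (x-s)(q(s)-z) u(s;z) ds`. -/
def IsRegSolution (a : ℝ) (q : ℝ → ℝ) (c₀ c₁ : ℝ) (u : ℂ → ℝ → ℂ) : Prop :=
  (∀ z : ℂ, ContinuousOn (u z) (Icc 0 a)) ∧
  ∀ z : ℂ, ∀ x ∈ Icc (0:ℝ) a,
    u z x = (c₀ : ℂ) + (x : ℂ) * (c₁ : ℂ) +
      ∫ s in (0:ℝ)..x, ((x : ℂ) - (s : ℂ)) * ((q s : ℂ) - z) * u z s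

open Filter Topology

namespace WeylAux

lemma ac_integral {f : ℝ → ℂ} {a : ℝ} (hf : IntervalIntegrable f volume 0 a) :
    AbsolutelyContinuousOnInterval (fun x => ∫ t in (0:ℝ)..x, f t) 0 a := by
  have h := hf.norm.absolutelyContinuousOnInterval_intervalIntegral (c := 0) (by simp)
  unfold AbsolutelyContinuousOnInterval at h ⊢
  refine squeeze_zero' ?_ ?_ h
  · exact Eventually.of_forall fun E => Finset.sum_nonneg fun i _ => dist_nonneg
  · have : ∀ᶠ E in AbsolutelyContinuousOnInterval.totalLengthFilter ⊓
        𝓟 (AbsolutelyContinuousOnInterval.disjWithin 0 a),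
        E ∈ AbsolutelyContinuousOnInterval.disjWithin 0 a :=
      eventually_inf_principal.2 (Eventually.of_forall fun _ h => h)
    filter_upwards [this] with E hE
    refine Finset.sum_le_sum fun i hi => ?_
    have hE' := hE.1 i hi
    have hint : ∀ y ∈ uIcc 0 a, IntervalIntegrable f volume 0 y := fun y hy =>
      hf.mono_set (uIcc_subset_uIcc left_mem_uIcc hy)
    have h1 := hint _ hE'.1
    have h2 := hint _ hE'.2
    rw [dist_eq_norm, dist_eq_norm, intervalIntegral.integral_interval_sub_left h1 h2,
      intervalIntegral.integral_interval_sub_left h1.norm h2.norm]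
    exact intervalIntegral.norm_integral_le_abs_integral_norm

lemma ac_const (c : ℂ) (a : ℝ) : AbsolutelyContinuousOnInterval (fun _ : ℝ => c) 0 a := by
  unfold AbsolutelyContinuousOnInterval
  simpa using tendsto_const_nhds

lemma prodInt {a : ℝ} {f g : ℝ → ℂ} (hf : IntervalIntegrable f volume 0 a)
    (hg : IntervalIntegrable g volume 0 a) (F0 G0 : ℂ) :
    (F0 + ∫ t in (0:ℝ)..a, f t) * (G0 + ∫ t in (0:ℝ)..a, g t) =
      F0 * G0 + ∫ t in (0:ℝ)..a, (f t * (G0 + ∫ s in (0:ℝ)..t, g s) +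
        (F0 + ∫ s in (0:ℝ)..t, f s) * g t) := by
  set F : ℝ → ℂ := fun x => F0 + ∫ s in (0:ℝ)..x, f s with hF
  set G : ℝ → ℂ := fun x => G0 + ∫ s in (0:ℝ)..x, g s with hG
  have acF : AbsolutelyContinuousOnInterval F 0 a := (ac_const F0 a).add (ac_integral hf)
  have acG : AbsolutelyContinuousOnInterval G 0 a := (ac_const G0 a).add (ac_integral hg)
  have hint : IntervalIntegrable (fun t => f t * G t + F t * g t) volume 0 a :=
    (hf.mul_continuousOn acG.continuousOn).add (hg.continuousOn_mul acF.continuousOn)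
  have acP : AbsolutelyContinuousOnInterval (fun x => F x * G x -
      ∫ t in (0:ℝ)..x, (f t * G t + F t * g t)) 0 a := (acF.smul acG).sub (ac_integral hint)
  obtain ⟨C, hC⟩ := acP.const_of_ae_hasDerivAt_zero (by
    filter_upwards [hf.ae_hasDerivAt_integral, hg.ae_hasDerivAt_integral,
      hint.ae_hasDerivAt_integral] with x h1 h2 h3 hx
    have h1 := (h1 hx 0 (by simp)).const_add F0
    have h2 := (h2 hx 0 (by simp)).const_add G0
    have h3 := h3 hx 0 (by simp)
    have h4 := (h1.mul h2).sub h3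
    have e : f x * (G0 + ∫ t in (0:ℝ)..x, g t) + (F0 + ∫ t in (0:ℝ)..x, f t) * g x -
      (f x * G x + F x * g x) = 0 := by simp [hF, hG]
    rw [e] at h4
    exact h4)
  have e0 := hC 0 (by simp)
  have e1 := hC a (by simp)
  rw [← e0] at e1
  simp only [hF, hG, intervalIntegral.integral_same, add_zero, sub_zero] at e1
  linear_combination e1

/-- A single solution, with complex initial data. -/
structure Sol (a : ℝ) (q : ℝ → ℝ) (z c₀ c₁ : ℂ) (u : ℝ → ℂ) : Prop where
  cont : ContinuousOn u (Icc 0 a)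
  eq : ∀ x ∈ Icc (0:ℝ) a, u x = c₀ + (x : ℂ) * c₁ +
      ∫ s in (0:ℝ)..x, ((x : ℂ) - (s : ℂ)) * ((q s : ℂ) - z) * u s

/-- Derivative of a solution. -/
noncomputable def dv (q : ℝ → ℝ) (z c₁ : ℂ) (u : ℝ → ℂ) (x : ℝ) : ℂ :=
  c₁ + ∫ s in (0:ℝ)..x, ((q s : ℂ) - z) * u s

section
variable {a : ℝ} {q : ℝ → ℝ} {z w c₀ c₁ d₀ d₁ : ℂ} {u v : ℝ → ℂ}

lemma q_int (ha : 0 ≤ a) (hq : IntegrableOn q (Icc 0 a)) (z : ℂ) :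
    IntervalIntegrable (fun s => (q s : ℂ) - z) volume 0 a := by
  have : IntervalIntegrable q volume 0 a :=
    (intervalIntegrable_iff_integrableOn_Icc_of_le ha).2 hq
  have h2 : IntervalIntegrable (fun s => (q s : ℂ)) volume 0 a := by
    rw [intervalIntegrable_iff] at this ⊢
    exact this.ofReal
  exact h2.sub intervalIntegrable_const

lemma Sol.int (ha : 0 ≤ a) (hq : IntegrableOn q (Icc 0 a)) (hu : Sol a q z c₀ c₁ u) :
    IntervalIntegrable (fun s => ((q s : ℂ) - z) * u s) volume 0 a :=
  (q_int ha hq z).mul_continuousOn (by rw [uIcc_of_le ha]; exact hu.cont)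

lemma int_mono {f : ℝ → ℂ} (hf : IntervalIntegrable f volume 0 a) {x : ℝ}
    (hx : x ∈ Icc 0 a) : IntervalIntegrable f volume 0 x :=
  hf.mono_set (uIcc_subset_uIcc left_mem_uIcc (Icc_subset_uIcc hx))

lemma Sol.eq_dv (ha : 0 ≤ a) (hq : IntegrableOn q (Icc 0 a)) (hu : Sol a q z c₀ c₁ u)
    {x : ℝ} (hx : x ∈ Icc 0 a) : u x = c₀ + ∫ t in (0:ℝ)..x, dv q z c₁ u t := by
  have hi := int_mono (hu.int ha hq) hx
  have h := prodInt (f := fun _ => 1) (intervalIntegrable_const) hi 0 c₁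
  have hxint : IntervalIntegrable (fun s : ℝ => (s:ℂ) * (((q s : ℂ) - z) * u s)) volume 0 x :=
    hi.continuousOn_mul (by fun_prop)
  have hc : IntervalIntegrable (fun t => dv q z c₁ u t) volume 0 x := by
    apply ContinuousOn.intervalIntegrable
    exact ((ac_const c₁ x).add (ac_integral hi)).continuousOn
  have e1 : ∀ t : ℝ, (∫ _ in (0:ℝ)..t, (1:ℂ)) = t := by intro t; simp
  simp only [e1, zero_add, one_mul, zero_mul] at h
  have h5 := intervalIntegral.integral_add hc hxint
  unfold dv at h5 ⊢
  rw [h5] at h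
  rw [hu.eq x hx]
  have h6 : ∫ s in (0:ℝ)..x, ((x : ℂ) - (s : ℂ)) * ((q s : ℂ) - z) * u s =
      (x : ℂ) * (∫ s in (0:ℝ)..x, ((q s : ℂ) - z) * u s) -
      ∫ s in (0:ℝ)..x, (s:ℂ) * (((q s : ℂ) - z) * u s) := by
    rw [← intervalIntegral.integral_const_mul, ← intervalIntegral.integral_sub _ hxint]
    · congr 1; ext s; ring
    · exact hi.const_mul _
  rw [h6]
  linear_combination h

lemma lagrange (ha : 0 ≤ a) (hq : IntegrableOn q (Icc 0 a)) (hu : Sol a q z c₀ c₁ u)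
    (hv : Sol a q w d₀ d₁ v) {x : ℝ} (hx : x ∈ Icc 0 a) :
    u x * dv q w d₁ v x - dv q z c₁ u x * v x =
      c₀ * d₁ - c₁ * d₀ + (z - w) * ∫ t in (0:ℝ)..x, u t * v t := by
  have iu := int_mono (hu.int ha hq) hx
  have iv := int_mono (hv.int ha hq) hx
  have cu : ContinuousOn (fun t => dv q z c₁ u t) (uIcc 0 x) :=
    ((ac_const c₁ x).add (ac_integral iu)).continuousOn
  have cv : ContinuousOn (fun t => dv q w d₁ v t) (uIcc 0 x) :=
    ((ac_const d₁ x).add (ac_integral iv)).continuousOn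
  have hsub : uIcc 0 x ⊆ Icc 0 a := by
    rw [uIcc_of_le hx.1]; exact Icc_subset_Icc_right hx.2
  have ucont := hu.cont.mono hsub
  have vcont := hv.cont.mono hsub
  have h1 := prodInt cu.intervalIntegrable iv c₀ d₁
  have h2 := prodInt iu cv.intervalIntegrable c₁ d₀
  rw [← hu.eq_dv ha hq hx] at h1
  rw [← hv.eq_dv ha hq hx] at h2
  have e1 : ∫ t in (0:ℝ)..x, (dv q z c₁ u t * (d₁ + ∫ s in (0:ℝ)..t, ((q s : ℂ) - w) * v s) +
        (c₀ + ∫ s in (0:ℝ)..t, dv q z c₁ u s) * (((q t : ℂ) - w) * v t)) =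
      ∫ t in (0:ℝ)..x, (dv q z c₁ u t * dv q w d₁ v t + u t * (((q t : ℂ) - w) * v t)) := by
    apply intervalIntegral.integral_congr
    intro t ht
    simp only
    rw [hu.eq_dv ha hq (hsub ht)]
    rfl
  have e2 : ∫ t in (0:ℝ)..x, ((((q t : ℂ) - z) * u t) * (d₀ + ∫ s in (0:ℝ)..t, dv q w d₁ v s) +
        (c₁ + ∫ s in (0:ℝ)..t, ((q s : ℂ) - z) * u s) * dv q w d₁ v t) =
      ∫ t in (0:ℝ)..x, ((((q t : ℂ) - z) * u t) * v t + dv q z c₁ u t * dv q w d₁ v t) := by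
    apply intervalIntegral.integral_congr
    intro t ht
    simp only
    rw [hv.eq_dv ha hq (hsub ht)]
    rfl
  rw [e1] at h1
  rw [e2] at h2
  have e3 : (z - w) * ∫ t in (0:ℝ)..x, u t * v t =
      (∫ t in (0:ℝ)..x, (dv q z c₁ u t * dv q w d₁ v t + u t * (((q t : ℂ) - w) * v t))) -
      ∫ t in (0:ℝ)..x, ((((q t : ℂ) - z) * u t) * v t + dv q z c₁ u t * dv q w d₁ v t) := by
    rw [← intervalIntegral.integral_const_mul, ← intervalIntegral.integral_sub]
    · congr 1; ext t; ring
    · exact (cu.mul cv).intervalIntegrable.add (iv.continuousOn_mul ucont)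
    · exact (iu.mul_continuousOn vcont).add (cu.mul cv).intervalIntegrable
  rw [e3]
  have h1' : u x * dv q w d₁ v x = _ := h1
  have h2' : dv q z c₁ u x * v x = _ := h2
  rw [h1', h2']
  ring

lemma conj_integral (f : ℝ → ℂ) (x : ℝ) :
    (starRingEnd ℂ) (∫ s in (0:ℝ)..x, f s) = ∫ s in (0:ℝ)..x, (starRingEnd ℂ) (f s) := by
  simp only [intervalIntegral, map_sub, integral_conj]

lemma Sol.conj (hu : Sol a q z c₀ c₁ u) :
    Sol a q (starRingEnd ℂ z) (starRingEnd ℂ c₀) (starRingEnd ℂ c₁)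
      (fun x => starRingEnd ℂ (u x)) where
  cont := Complex.continuous_conj.comp_continuousOn hu.cont
  eq x hx := by
    rw [hu.eq x hx]
    simp [conj_integral]

lemma dv_conj (x : ℝ) :
    dv q (starRingEnd ℂ z) (starRingEnd ℂ c₁) (fun x => starRingEnd ℂ (u x)) x =
      starRingEnd ℂ (dv q z c₁ u x) := by
  simp [dv, conj_integral]

lemma Sol.comb (ha : 0 ≤ a) (hq : IntegrableOn q (Icc 0 a)) (hu : Sol a q z c₀ c₁ u)
    (hv : Sol a q z d₀ d₁ v) (m : ℂ) :
    Sol a q z (c₀ - m * d₀) (c₁ - m * d₁) (fun x => u x - m * v x) where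
  cont := hu.cont.sub (hv.cont.const_smul m)
  eq x hx := by
    have iu := int_mono (hu.int ha hq) hx
    have iv := int_mono (hv.int ha hq) hx
    have iu' : IntervalIntegrable (fun s : ℝ => ((x : ℂ) - (s : ℂ)) * ((q s : ℂ) - z) * u s)
      volume 0 x := by
      simp only [mul_assoc]
      exact iu.continuousOn_mul (by fun_prop)
    have iv' : IntervalIntegrable (fun s : ℝ => ((x : ℂ) - (s : ℂ)) * ((q s : ℂ) - z) * v s)
      volume 0 x := by
      simp only [mul_assoc]
      exact iv.continuousOn_mul (by fun_prop)
    have e : ∫ s in (0:ℝ)..x, ((x : ℂ) - (s : ℂ)) * ((q s : ℂ) - z) * (u s - m * v s) =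
      (∫ s in (0:ℝ)..x, ((x : ℂ) - (s : ℂ)) * ((q s : ℂ) - z) * u s) -
      m * ∫ s in (0:ℝ)..x, ((x : ℂ) - (s : ℂ)) * ((q s : ℂ) - z) * v s := by
      rw [← intervalIntegral.integral_const_mul, ← intervalIntegral.integral_sub iu'
        (iv'.const_mul _)]
      congr 1; ext s; ring
    rw [e, hu.eq x hx, hv.eq x hx]
    ring

lemma dv_comb (ha : 0 ≤ a) (hq : IntegrableOn q (Icc 0 a)) (hu : Sol a q z c₀ c₁ u)
    (hv : Sol a q z d₀ d₁ v) (m : ℂ) :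
    dv q z (c₁ - m * d₁) (fun x => u x - m * v x) a = dv q z c₁ u a - m * dv q z d₁ v a := by
  have iu := hu.int ha hq
  have iv := hv.int ha hq
  have e : ∫ s in (0:ℝ)..a, ((q s : ℂ) - z) * (u s - m * v s) =
      (∫ s in (0:ℝ)..a, ((q s : ℂ) - z) * u s) -
      m * ∫ s in (0:ℝ)..a, ((q s : ℂ) - z) * v s := by
    rw [← intervalIntegral.integral_const_mul, ← intervalIntegral.integral_sub iu
        (iv.const_mul _)]
    congr 1; ext s; ring
  simp only [dv, e]
  ring

lemma energy (ha : 0 ≤ a) (hq : IntegrableOn q (Icc 0 a)) (hu : Sol a q z c₀ c₁ u) :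
    (dv q z c₁ u a * starRingEnd ℂ (u a)).im =
      (c₁ * starRingEnd ℂ c₀).im - z.im * ∫ t in (0:ℝ)..a, ‖u t‖ ^ 2 := by
  have h := lagrange ha hq hu hu.conj (right_mem_Icc.2 ha)
  rw [dv_conj] at h
  have e : ∫ t in (0:ℝ)..a, u t * starRingEnd ℂ (u t) =
      ((∫ t in (0:ℝ)..a, ‖u t‖ ^ 2 : ℝ) : ℂ) := by
    rw [← intervalIntegral.integral_ofReal]
    congr 1; ext t; rw [Complex.mul_conj']; simp
  rw [e] at h
  have h' := congrArg Complex.im h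
  simp at h' ⊢
  linarith


lemma energy_neg (ha : 0 < a) (hq : IntegrableOn q (Icc 0 a)) (hu : Sol a q z c₀ c₁ u)
    (hz : z.im ≠ 0) (hc : (c₁ * starRingEnd ℂ c₀).im = 0) (hc0 : c₀ ≠ 0) :
    z.im * (dv q z c₁ u a * starRingEnd ℂ (u a)).im < 0 := by
  rw [energy ha.le hq hu, hc]
  have hu0 : u 0 = c₀ := by
    have := hu.eq 0 (left_mem_Icc.2 ha.le)
    simpa using this
  have : 0 < ∫ t in (0:ℝ)..a, ‖u t‖ ^ 2 := by
    apply intervalIntegral.integral_pos (f := fun t => ‖u t‖ ^ 2) ha (hu.cont.norm.pow 2)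
    · intro x _; positivity
    · exact ⟨0, left_mem_Icc.2 ha.le, by simp only [hu0]; positivity⟩
  have h2 : 0 < z.im ^ 2 := by positivity
  nlinarith [mul_pos h2 this]

/-- Expansion of any solution in terms of a fundamental system. -/
lemma expand (ha : 0 ≤ a) (hq : IntegrableOn q (Icc 0 a)) {p r : ℝ → ℂ} {p₀ p₁ r₀ r₁ : ℂ}
    (hp : Sol a q z p₀ p₁ p) (hr : Sol a q z r₀ r₁ r) (hW : p₀ * r₁ - p₁ * r₀ = 1)
    (hu : Sol a q w c₀ c₁ u) {x : ℝ} (hx : x ∈ Icc 0 a) :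
    u x = p x * (c₀ * r₁ - c₁ * r₀ + (w - z) * ∫ t in (0:ℝ)..x, u t * r t) -
      r x * (c₀ * p₁ - c₁ * p₀ + (w - z) * ∫ t in (0:ℝ)..x, u t * p t) ∧
    dv q w c₁ u x = dv q z p₁ p x *
        (c₀ * r₁ - c₁ * r₀ + (w - z) * ∫ t in (0:ℝ)..x, u t * r t) -
      dv q z r₁ r x * (c₀ * p₁ - c₁ * p₀ + (w - z) * ∫ t in (0:ℝ)..x, u t * p t) := by
  rw [← lagrange ha hq hu hr hx, ← lagrange ha hq hu hp hx]
  have h := lagrange ha hq hp hr hx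
  rw [hW, sub_self, zero_mul, add_zero] at h
  constructor
  · linear_combination -(u x) * h
  · linear_combination -(dv q w c₁ u x) * h

lemma unique (ha : 0 ≤ a) (hq : IntegrableOn q (Icc 0 a)) {p r : ℝ → ℂ} {p₀ p₁ r₀ r₁ : ℂ}
    (hp : Sol a q z p₀ p₁ p) (hr : Sol a q z r₀ r₁ r) (hW : p₀ * r₁ - p₁ * r₀ = 1)
    (hu : Sol a q z c₀ c₁ u) (hv : Sol a q z c₀ c₁ v) {x : ℝ} (hx : x ∈ Icc 0 a) :
    u x = v x ∧ dv q z c₁ u x = dv q z c₁ v x := by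
  have h1 := expand ha hq hp hr hW hu hx
  have h2 := expand ha hq hp hr hW hv hx
  simp only [sub_self, zero_mul, add_zero] at h1 h2
  exact ⟨h1.1.trans h2.1.symm, h1.2.trans h2.2.symm⟩

lemma diff_of_caratheodory {f K : ℂ → ℂ} {z : ℂ} (h : ∀ w, f w = f z + (w - z) * K w)
    (hK : ContinuousAt K z) : DifferentiableAt ℂ f z := by
  have : HasDerivAt f (K z) z := by
    rw [hasDerivAt_iff_tendsto_slope]
    refine (hK.tendsto.mono_left nhdsWithin_le_nhds).congr' ?_
    filter_upwards [self_mem_nhdsWithin] with w hw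
    have : w - z ≠ 0 := sub_ne_zero.2 hw
    rw [slope_def_field, h w]
    field_simp
    ring
  exact this.differentiableAt

lemma norm_int_le (ha : 0 ≤ a) {f g : ℝ → ℂ} {A B : ℝ} (hA : 0 ≤ A) (hB : 0 ≤ B)
    (hf : ∀ x ∈ Icc 0 a, ‖f x‖ ≤ A)
    (hg : ∀ x ∈ Icc 0 a, ‖g x‖ ≤ B) {x : ℝ} (hx : x ∈ Icc 0 a) :
    ‖∫ t in (0:ℝ)..x, f t * g t‖ ≤ A * B * a := by
  have := intervalIntegral.norm_integral_le_of_norm_le_const (a := 0) (b := x)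
    (f := fun t => f t * g t) (C := A * B) (by
      intro t ht
      rw [uIoc_of_le hx.1] at ht
      have ht' : t ∈ Icc 0 a := ⟨ht.1.le, ht.2.trans hx.2⟩
      rw [norm_mul]
      exact mul_le_mul (hf t ht') (hg t ht') (norm_nonneg _) hA)
  rw [sub_zero, abs_of_nonneg hx.1] at this
  exact this.trans (mul_le_mul_of_nonneg_left hx.2 (by positivity))

lemma cont_int (ha : 0 ≤ a) {U : ℂ → ℝ → ℂ} {g : ℝ → ℂ} (hU : ∀ w, ContinuousOn (U w) (Icc 0 a))
    (hg : ContinuousOn g (Icc 0 a)) {L δ : ℝ} (hL : 0 ≤ L) (hδ : 0 < δ)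
    (hlip : ∀ w, ‖w - z‖ < δ → ∀ x ∈ Icc 0 a, ‖U w x - U z x‖ ≤ ‖w - z‖ * L) :
    ContinuousAt (fun w => ∫ t in (0:ℝ)..a, U w t * g t) z := by
  obtain ⟨B, hB⟩ := isCompact_Icc.exists_bound_of_continuousOn hg
  have hB0 : 0 ≤ B := (norm_nonneg _).trans (hB 0 (left_mem_Icc.2 ha))
  have hI : ∀ w, IntervalIntegrable (fun t => U w t * g t) volume 0 a := fun w =>
    ContinuousOn.intervalIntegrable (by rw [uIcc_of_le ha]; exact (hU w).mul hg)
  rw [ContinuousAt, tendsto_iff_norm_sub_tendsto_zero]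
  have ht : Tendsto (fun w : ℂ => ‖w - z‖ * L * B * a) (𝓝 z) (𝓝 0) := by
    have : Continuous (fun w : ℂ => ‖w - z‖ * L * B * a) := by fun_prop
    simpa using this.tendsto z
  refine squeeze_zero' (Eventually.of_forall fun _ => norm_nonneg _) ?_ ht
  filter_upwards [Metric.ball_mem_nhds z hδ] with w hw
  rw [Metric.mem_ball, dist_eq_norm] at hw
  rw [← intervalIntegral.integral_sub (hI w) (hI z)]
  simp only [← sub_mul]
  exact norm_int_le ha (f := fun t => U w t - U z t) (by positivity) hB0 (hlip w hw) hB
    (right_mem_Icc.2 ha)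

lemma holo (ha : 0 ≤ a) (hq : IntegrableOn q (Icc 0 a)) {p r : ℝ → ℂ} {p₀ p₁ r₀ r₁ : ℂ}
    (hp : Sol a q z p₀ p₁ p) (hr : Sol a q z r₀ r₁ r) (hW : p₀ * r₁ - p₁ * r₀ = 1)
    {U : ℂ → ℝ → ℂ} (hU : ∀ w, Sol a q w c₀ c₁ (U w)) :
    DifferentiableAt ℂ (fun w => U w a) z ∧
    DifferentiableAt ℂ (fun w => dv q w c₁ (U w) a) z := by
  have key : ∀ w, ∀ x ∈ Icc 0 a, U w x = U z x + (w - z) *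
      (p x * (∫ t in (0:ℝ)..x, U w t * r t) - r x * ∫ t in (0:ℝ)..x, U w t * p t) ∧
      dv q w c₁ (U w) x = dv q z c₁ (U z) x + (w - z) * (dv q z p₁ p x *
        (∫ t in (0:ℝ)..x, U w t * r t) - dv q z r₁ r x * ∫ t in (0:ℝ)..x, U w t * p t) := by
    intro w x hx
    have h1 := expand ha hq hp hr hW (hU w) hx
    have h2 := expand ha hq hp hr hW (hU z) hx
    rw [h1.1, h1.2, h2.1, h2.2]
    constructor <;> ring
  obtain ⟨P, hP⟩ := isCompact_Icc.exists_bound_of_continuousOn hp.cont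
  obtain ⟨R, hR⟩ := isCompact_Icc.exists_bound_of_continuousOn hr.cont
  obtain ⟨M, hM⟩ := isCompact_Icc.exists_bound_of_continuousOn (hU z).cont
  have h0 : (0:ℝ) ∈ Icc 0 a := left_mem_Icc.2 ha
  have hP0 : 0 ≤ P := (norm_nonneg _).trans (hP 0 h0)
  have hR0 : 0 ≤ R := (norm_nonneg _).trans (hR 0 h0)
  have hM0 : 0 ≤ M := (norm_nonneg _).trans (hM 0 h0)
  set D : ℝ := 2 * P * R * a with hD
  have hD0 : 0 ≤ D := by positivity
  have est : ∀ w N, (∀ x ∈ Icc 0 a, ‖U w x‖ ≤ N) → 0 ≤ N →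
      ∀ x ∈ Icc 0 a, ‖U w x - U z x‖ ≤ ‖w - z‖ * (D * N) := by
    intro w N hN hN0 x hx
    rw [(key w x hx).1, add_sub_cancel_left, norm_mul]
    gcongr
    have i1 := norm_int_le ha hN0 hR0 hN hR hx
    have i2 := norm_int_le ha hN0 hP0 hN hP hx
    calc _ ≤ ‖p x‖ * ‖∫ t in (0:ℝ)..x, U w t * r t‖ +
          ‖r x‖ * ‖∫ t in (0:ℝ)..x, U w t * p t‖ := by
          rw [← norm_mul, ← norm_mul]; exact norm_sub_le _ _
      _ ≤ P * (N * R * a) + R * (N * P * a) := by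
          gcongr
          · exact hP x hx
          · exact hR x hx
      _ = D * N := by rw [hD]; ring
  have hlip : ∀ w, ‖w - z‖ < 1 / (2 * (D + 1)) → ∀ x ∈ Icc 0 a,
      ‖U w x - U z x‖ ≤ ‖w - z‖ * (D * (2 * M)) := by
    intro w hw
    obtain ⟨y, hy, hmax⟩ := isCompact_Icc.exists_isMaxOn ⟨0, h0⟩ (hU w).cont.norm
    have hN : ∀ x ∈ Icc 0 a, ‖U w x‖ ≤ ‖U w y‖ := fun x hx => hmax hx
    have e := est w _ hN (norm_nonneg _) y hy
    have hw' : ‖w - z‖ * D ≤ 1 / 2 := by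
      rw [lt_div_iff₀ (by positivity)] at hw
      nlinarith [norm_nonneg (w - z)]
    have : ‖U w y‖ ≤ 2 * M := by
      have t1 : ‖U w y‖ ≤ ‖U z y‖ + ‖U w y - U z y‖ := by
        have := norm_add_le (U z y) (U w y - U z y)
        simpa using this
      have t2 := hM y hy
      nlinarith [mul_le_mul_of_nonneg_right hw' (norm_nonneg (U w y))]
    exact est w _ (fun x hx => (hN x hx).trans this) (by positivity)
  have hc : ∀ w, ContinuousOn (U w) (Icc 0 a) := fun w => (hU w).cont
  have c1 := cont_int ha hc hr.cont (by positivity) (by positivity) hlip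
  have c2 := cont_int ha hc hp.cont (by positivity) (by positivity) hlip
  have haa := right_mem_Icc.2 ha
  exact ⟨diff_of_caratheodory (fun w => (key w a haa).1)
      ((continuousAt_const.mul c1).sub (continuousAt_const.mul c2)),
    diff_of_caratheodory (fun w => (key w a haa).2)
      ((continuousAt_const.mul c1).sub (continuousAt_const.mul c2))⟩

/-- Imaginary part of a Weyl-type coefficient. -/
lemma im_m (ha : 0 ≤ a) (hq : IntegrableOn q (Icc 0 a)) {α : ℝ} {p r : ℝ → ℂ}
    (hp : Sol a q z (Real.sin α : ℝ) (Real.cos α : ℝ) p)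
    (hr : Sol a q z (-Real.cos α : ℝ) (Real.sin α : ℝ) r) (hz : 0 < z.im) (m : ℂ)
    (h : 0 ≤ ((dv q z (Real.sin α : ℝ) r a - m * dv q z (Real.cos α : ℝ) p a) *
      starRingEnd ℂ (r a - m * p a)).im) : 0 ≤ m.im := by
  have e := energy ha hq (hr.comb ha hq hp m)
  rw [dv_comb ha hq hr hp m] at e
  rw [e] at h
  have i0 : 0 ≤ ∫ t in (0:ℝ)..a, ‖r t - m * p t‖ ^ 2 :=
    intervalIntegral.integral_nonneg ha fun _ _ => by positivity
  have e2 : ((((Real.sin α : ℝ) : ℂ) - m * (Real.cos α : ℝ)) *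
      starRingEnd ℂ (((-Real.cos α : ℝ) : ℂ) - m * (Real.sin α : ℝ))).im = m.im := by
    simp only [map_sub, map_mul, Complex.conj_ofReal, Complex.mul_im, Complex.sub_im,
      Complex.sub_re, Complex.mul_re, Complex.ofReal_re, Complex.ofReal_im, Complex.conj_re,
      Complex.conj_im]
    linear_combination m.im * Real.sin_sq_add_cos_sq α
  rw [e2] at h
  nlinarith [mul_nonneg hz.le i0]

end
end WeylAux

/-- **The Weyl–Titchmarsh function of a regular Sturm–Liouville problem is a Nevanlinna
function** (part of Statement 2.1°). For every Nevanlinna boundary parameter `γ` (and also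
for `γ ≡ ∞`, giving `m_∞(z) = ψ(a;z)/φ(a;z)`) the denominator does not vanish on `ℂ∖ℝ`
and `m_γ` is a Nevanlinna function. -/
theorem weylFn_isNevanlinna
    (a : ℝ) (ha : 0 < a)
    (q : ℝ → ℝ) (hq : IntegrableOn q (Icc 0 a))
    (α : ℝ) (hα : α ∈ Ioo 0 Real.pi)
    (φ ψ : ℂ → ℝ → ℂ)
    (hφ : IsRegSolution a q (Real.sin α) (Real.cos α) φ)
    (hψ : IsRegSolution a q (-Real.cos α) (Real.sin α) ψ)
    (φ' : ℂ → ℂ) (hφ' : ∀ z : ℂ,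
      φ' z = (Real.cos α : ℂ) + ∫ s in (0:ℝ)..a, ((q s : ℂ) - z) * φ z s)
    (ψ' : ℂ → ℂ) (hψ' : ∀ z : ℂ,
      ψ' z = (Real.sin α : ℂ) + ∫ s in (0:ℝ)..a, ((q s : ℂ) - z) * ψ z s)
    (γ : ℂ → ℂ) (hγ : IsNevanlinna γ) :
    ((∀ z : ℂ, z.im ≠ 0 → φ' z - φ z a * γ z ≠ 0) ∧
      IsNevanlinna (fun z => (ψ' z - ψ z a * γ z) / (φ' z - φ z a * γ z))) ∧
    ((∀ z : ℂ, z.im ≠ 0 → φ z a ≠ 0) ∧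
      IsNevanlinna (fun z => ψ z a / φ z a)) := by
  have sφ : ∀ z, WeylAux.Sol a q z (Real.sin α : ℝ) (Real.cos α : ℝ) (φ z) :=
    fun z => ⟨hφ.1 z, hφ.2 z⟩
  have sψ : ∀ z, WeylAux.Sol a q z (-Real.cos α : ℝ) (Real.sin α : ℝ) (ψ z) :=
    fun z => ⟨hψ.1 z, hψ.2 z⟩
  have eφ : ∀ z, φ' z = WeylAux.dv q z (Real.cos α : ℝ) (φ z) a := hφ'
  have eψ : ∀ z, ψ' z = WeylAux.dv q z (Real.sin α : ℝ) (ψ z) a := hψ'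
  have hW : ((Real.sin α : ℝ) : ℂ) * (Real.sin α : ℝ) -
      (Real.cos α : ℝ) * ((-Real.cos α : ℝ) : ℂ) = 1 := by
    have := Real.sin_sq_add_cos_sq α
    have h2 : (((Real.sin α) ^ 2 + (Real.cos α) ^ 2 : ℝ) : ℂ) = 1 := by rw [this]; simp
    push_cast at h2 ⊢
    linear_combination h2
  have hsin : Real.sin α ≠ 0 := (Real.sin_pos_of_mem_Ioo hα).ne'
  have haa : a ∈ Icc 0 a := right_mem_Icc.2 ha.le
  obtain ⟨γd, γc, γp⟩ := hγ
  have hφd : ∀ z, DifferentiableAt ℂ (fun w => φ w a) z ∧ DifferentiableAt ℂ φ' z := fun z => by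
    rw [show φ' = fun w => WeylAux.dv q w (Real.cos α : ℝ) (φ w) a from funext eφ]
    exact WeylAux.holo ha.le hq (sφ z) (sψ z) hW sφ
  have hψd : ∀ z, DifferentiableAt ℂ (fun w => ψ w a) z ∧ DifferentiableAt ℂ ψ' z := fun z => by
    rw [show ψ' = fun w => WeylAux.dv q w (Real.sin α : ℝ) (ψ w) a from funext eψ]
    exact WeylAux.holo ha.le hq (sφ z) (sψ z) hW sψ
  have hφc : ∀ z, φ (starRingEnd ℂ z) a = starRingEnd ℂ (φ z a) ∧
      φ' (starRingEnd ℂ z) = starRingEnd ℂ (φ' z) := fun z => by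
    have h := (sφ z).conj
    have h3 := WeylAux.dv_conj (q := q) (z := z) (c₁ := (Real.cos α : ℝ)) (u := φ z) a
    simp only [Complex.conj_ofReal] at h h3
    have := WeylAux.unique ha.le hq (sφ _) (sψ _) hW (sφ _) h haa
    rw [h3, ← eφ, ← eφ] at this
    exact this
  have hψc : ∀ z, ψ (starRingEnd ℂ z) a = starRingEnd ℂ (ψ z a) ∧
      ψ' (starRingEnd ℂ z) = starRingEnd ℂ (ψ' z) := fun z => by
    have h := (sψ z).conj
    have h3 := WeylAux.dv_conj (q := q) (z := z) (c₁ := (Real.sin α : ℝ)) (u := ψ z) a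
    simp only [Complex.conj_ofReal] at h h3
    have := WeylAux.unique ha.le hq (sφ _) (sψ _) hW (sψ _) h haa
    rw [h3, ← eψ, ← eψ] at this
    exact this
  have hneg : ∀ z : ℂ, z.im ≠ 0 → z.im * (φ' z * starRingEnd ℂ (φ z a)).im < 0 := fun z hz => by
    rw [eφ]
    refine WeylAux.energy_neg ha hq (sφ z) hz ?_ (by exact_mod_cast hsin)
    rw [Complex.conj_ofReal, ← Complex.ofReal_mul, Complex.ofReal_im]
  have hγ2 : ∀ z : ℂ, z.im ≠ 0 → 0 ≤ z.im * (γ z).im := fun z hz => by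
    rcases lt_or_gt_of_ne hz with h | h
    · have h1 := γp (starRingEnd ℂ z) (by simpa using h)
      rw [γc z hz, Complex.conj_im] at h1
      nlinarith
    · exact mul_nonneg h.le (γp z h)
  have him : ∀ y g : ℂ, (y * g * starRingEnd ℂ y).im = g.im * Complex.normSq y := fun y g => by
    simp [Complex.normSq_apply]; ring
  have hne1 : ∀ z : ℂ, z.im ≠ 0 → φ' z - φ z a * γ z ≠ 0 := fun z hz h0 => by
    have h := hneg z hz
    rw [sub_eq_zero.1 h0, him] at h
    nlinarith [mul_nonneg (hγ2 z hz) (Complex.normSq_nonneg (φ z a))]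
  have hne2 : ∀ z : ℂ, z.im ≠ 0 → φ z a ≠ 0 := fun z hz h0 => by
    have h := hneg z hz
    rw [h0] at h
    simp at h
  have hopen : IsOpen {z : ℂ | z.im ≠ 0} := isOpen_ne_fun Complex.continuous_im continuous_const
  refine ⟨⟨hne1, ?_, ?_, ?_⟩, ⟨hne2, ?_, ?_, ?_⟩⟩
  · intro z hz
    have g := γd.differentiableAt (hopen.mem_nhds hz)
    exact (((hψd z).2.sub ((hψd z).1.mul g)).div
      ((hφd z).2.sub ((hφd z).1.mul g)) (hne1 z hz)).differentiableWithinAt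
  · intro z hz
    simp only [(hφc z).1, (hφc z).2, (hψc z).1, (hψc z).2, γc z hz, map_div₀, map_sub, map_mul]
  · intro z hz
    refine WeylAux.im_m ha.le hq (sφ z) (sψ z) hz _ ?_
    rw [← eφ, ← eψ]
    set m := (ψ' z - ψ z a * γ z) / (φ' z - φ z a * γ z) with hm
    have hm' : m * (φ' z - φ z a * γ z) = ψ' z - ψ z a * γ z := by
      rw [hm]; exact div_mul_cancel₀ _ (hne1 z hz.ne')
    have e : ψ' z - m * φ' z = (ψ z a - m * φ z a) * γ z := by linear_combination -hm'
    rw [e, him]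
    exact mul_nonneg (γp z hz) (Complex.normSq_nonneg _)
  · intro z hz
    exact ((hψd z).1.div (hφd z).1 (hne2 z hz)).differentiableWithinAt
  · intro z hz
    simp only [(hφc z).1, (hψc z).1, map_div₀]
  · intro z hz
    refine WeylAux.im_m ha.le hq (sφ z) (sψ z) hz _ ?_
    have e : ψ z a - ψ z a / φ z a * φ z a = 0 := by
      rw [div_mul_cancel₀ _ (hne2 z hz.ne'), sub_self]
    simp only [e]
    simp
end

section
/- Closed form of the quadratic Fourier series in Example 3: For every λ₀ ∈ (−π/2, π/2] with λ₀ ≠ 0 and every x ∈ [−π, π]: ∑_{k∈ℤ} e^{2ikx}/(λ₀+kπ)² = e^{−2iλ₀x/π}·( (2/π)·(−|x| + i·x·cot λ₀) + 1/(sin λ₀)² ), the series converging absolutely. -/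
open Complex

noncomputable def ex3F (l : ℝ) (y : ℝ) : ℂ :=
  Complex.exp (-2 * Complex.I * l * y / Real.pi) *
        ((2 / Real.pi) * (-(y : ℂ) +
            Complex.I * y * ((Real.cos l : ℂ) / (Real.sin l : ℂ))) +
          1 / ((Real.sin l : ℂ)) ^ 2)

lemma ex3_summable (l : ℝ) :
    Summable (fun k : ℤ => 1 / ((l : ℂ) + k * Real.pi) ^ 2) := by
  have h := (EisensteinSeries.linear_right_summable ((l : ℂ) / Real.pi) 1 (k := 2) le_rfl).mul_left
    (1 / (Real.pi : ℂ) ^ 2)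
  refine h.congr fun k => ?_
  have hpi : (Real.pi : ℂ) ≠ 0 := by exact_mod_cast Real.pi_ne_zero
  have : (l : ℂ) + k * Real.pi = Real.pi * (((1 : ℤ) : ℂ) * ((l : ℂ) / Real.pi) + k) := by
    push_cast; field_simp
  rw [this, mul_pow, one_div, one_div, mul_inv]
  norm_cast

lemma ex3_exp (l : ℝ) : Complex.exp (-2 * Complex.I * l) =
    ((Real.cos l : ℂ) - Complex.I * Real.sin l) ^ 2 := by
  have : -2 * Complex.I * (l : ℂ) = ((2 : ℕ) : ℂ) * (((-l : ℝ) : ℂ) * Complex.I) := by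
    push_cast; ring
  rw [this, Complex.exp_nat_mul, Complex.exp_mul_I, ← Complex.ofReal_cos, ← Complex.ofReal_sin,
    Real.cos_neg, Real.sin_neg]
  push_cast; ring

lemma ex3_cs (l : ℝ) : (Real.cos l : ℂ) ^ 2 = 1 - (Real.sin l : ℂ) ^ 2 := by
  have := Real.sin_sq_add_cos_sq l
  have h2 : (Real.sin l : ℂ) ^ 2 + (Real.cos l : ℂ) ^ 2 = 1 := by exact_mod_cast this
  linear_combination h2

lemma ex3_ends (l : ℝ) (hs : Real.sin l ≠ 0) : ex3F l 0 = ex3F l Real.pi := by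
  have hpi : (Real.pi : ℂ) ≠ 0 := by exact_mod_cast Real.pi_ne_zero
  have hs' : (Real.sin l : ℂ) ≠ 0 := by exact_mod_cast hs
  unfold ex3F
  rw [mul_div_cancel_right₀ _ hpi, ex3_exp]
  have h := ex3_cs l
  have hI := Complex.I_sq
  generalize (Real.cos l : ℂ) = c at *
  generalize (Real.sin l : ℂ) = s at *
  simp only [Complex.ofReal_zero, mul_zero, zero_div, Complex.exp_zero]
  field_simp
  have h4 : (c - I * s) * (c + I * s) = 1 := by linear_combination h - s ^ 2 * hI
  have key : 2 * s * (-s + I * c) + 1 = (c + I * s) ^ 2 := by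
    linear_combination -h - s ^ 2 * hI
  linear_combination (-Real.pi * (c - I * s) ^ 2) * key -
    Real.pi * ((c - I * s) * (c + I * s) + 1) * h4

lemma ex3_coeff (l : ℝ) (hs : Real.sin l ≠ 0) (n : ℤ) (hn : (l : ℂ) + n * Real.pi ≠ 0) :
    (1 / Real.pi : ℂ) * ∫ y in (0 : ℝ)..Real.pi, Complex.exp (2 * Complex.I * (-n) * y) * ex3F l y
      = 1 / ((l : ℂ) + n * Real.pi) ^ 2 := by
  have hpi : (Real.pi : ℂ) ≠ 0 := by exact_mod_cast Real.pi_ne_zero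
  have hs' : (Real.sin l : ℂ) ≠ 0 := by exact_mod_cast hs
  set w : ℂ := (l : ℂ) + n * Real.pi with hw
  obtain ⟨c, hc⟩ : ∃ c : ℂ, c = -2 * I * w / Real.pi := ⟨_, rfl⟩
  have hc0 : c ≠ 0 := by
    rw [hc]; simp [hpi, hn]
  obtain ⟨A, hA⟩ : ∃ A : ℂ, A = (2 / Real.pi) * (-1 + I * ((Real.cos l : ℂ) / Real.sin l)) :=
    ⟨_, rfl⟩
  obtain ⟨B, hB⟩ : ∃ B : ℂ, B = 1 / (Real.sin l : ℂ) ^ 2 := ⟨_, rfl⟩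
  have hfun : ∀ y : ℝ, Complex.exp (2 * Complex.I * (-n) * y) * ex3F l y =
      Complex.exp (c * y) * (A * y + B) := by
    intro y
    unfold ex3F
    rw [← mul_assoc, ← Complex.exp_add]
    congr 1
    · congr 1
      rw [hc, hw]; field_simp; ring
    · rw [hA, hB]; ring
  have hderiv : ∀ y : ℝ, HasDerivAt
      (fun y : ℝ => Complex.exp (c * y) * ((A * y + B) / c - A / c ^ 2))
      (Complex.exp (c * y) * (A * y + B)) y := by
    intro y
    have h1 : HasDerivAt (fun z : ℂ => Complex.exp (c * z) * ((A * z + B) / c - A / c ^ 2))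
      (Complex.exp (c * y) * (A * y + B)) (y : ℂ) := by
      have e1 : HasDerivAt (fun z : ℂ => Complex.exp (c * z)) (Complex.exp (c * y) * (c * 1)) (y : ℂ) :=
        ((hasDerivAt_id (y : ℂ)).const_mul c).cexp
      have e2 : HasDerivAt (fun z : ℂ => (A * z + B) / c - A / c ^ 2) ((A * 1) / c) (y : ℂ) :=
        ((((hasDerivAt_id (y : ℂ)).const_mul A).add_const B).div_const c).sub_const _
      refine (e1.mul e2).congr_deriv ?_
      simp only [mul_one]
      have hcc : c * ((A * y + B) / c - A / c ^ 2) + A / c = A * y + B := by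
        field_simp
        ring
      linear_combination (Complex.exp (c * y)) * hcc
    exact h1.comp_ofReal
  simp_rw [hfun]
  rw [intervalIntegral.integral_eq_sub_of_hasDerivAt (fun y _ => hderiv y)
    (Continuous.intervalIntegrable (by fun_prop) _ _)]
  have hexp : Complex.exp (c * Real.pi) = ((Real.cos l : ℂ) - Complex.I * Real.sin l) ^ 2 := by
    rw [← ex3_exp, hc, hw]
    have : -2 * I * ((l : ℂ) + n * Real.pi) / Real.pi * Real.pi =
      -2 * I * l + ((-n : ℤ) : ℂ) * (2 * Real.pi * I) := by
      push_cast; field_simp; ring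
    rw [this, Complex.exp_add, Complex.exp_int_mul_two_pi_mul_I, mul_one]
  have hends := ex3_ends l hs
  have e0 : ex3F l 0 = B := by simp [ex3F, hB]
  have e1 : ex3F l Real.pi = ((Real.cos l : ℂ) - Complex.I * Real.sin l) ^ 2 * (A * Real.pi + B) := by
    rw [← ex3_exp]
    unfold ex3F
    rw [mul_div_assoc, div_self hpi, mul_one, hA, hB]
    ring
  rw [e0, e1] at hends
  have hA2 : A * (1 - ((Real.cos l : ℂ) - Complex.I * Real.sin l) ^ 2) = -4 / Real.pi := by
    rw [hA]
    have h := ex3_cs l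
    have hI := Complex.I_sq
    generalize (Real.cos l : ℂ) = c at *
    generalize (Real.sin l : ℂ) = s at *
    field_simp
    have h4 : (c - I * s) * (c + I * s) = 1 := by linear_combination h - s ^ 2 * hI
    have k1 : -s + I * c = I * (c + I * s) := by linear_combination -s * hI
    have k2 : 1 - (c - I * s) ^ 2 = 2 * I * s * (c - I * s) := by
      linear_combination -h + s ^ 2 * hI
    rw [k1, k2]
    linear_combination 4 * I ^ 2 * s * h4 + 4 * s * hI
  rw [hexp]
  simp only [Complex.ofReal_zero, mul_zero, Complex.exp_zero, zero_add, one_mul]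
  have : ((Real.cos l : ℂ) - Complex.I * Real.sin l) ^ 2 * ((A * Real.pi + B) / c - A / c ^ 2)
      - (B / c - A / c ^ 2) = (-4 / Real.pi) / c ^ 2 := by
    rw [← hA2]
    linear_combination (-1 / c) * hends
  rw [this, hc]
  field_simp
  rw [Complex.I_sq]; ring

lemma ex3_hasSum (l : ℝ) (hs : Real.sin l ≠ 0) (hn : ∀ n : ℤ, (l : ℂ) + n * Real.pi ≠ 0)
    (x : ℝ) (hx : x ∈ Set.Icc 0 Real.pi) :
    HasSum (fun k : ℤ =>
      Complex.exp (2 * Complex.I * k * x) / ((l : ℂ) + k * Real.pi) ^ 2) (ex3F l x) := by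
  have hpi : (Real.pi : ℂ) ≠ 0 := by exact_mod_cast Real.pi_ne_zero
  suffices H : ∀ y ∈ Set.Ico 0 Real.pi, HasSum (fun k : ℤ =>
      Complex.exp (2 * Complex.I * k * y) / ((l : ℂ) + k * Real.pi) ^ 2) (ex3F l y) by
    rcases hx.2.lt_or_eq with h | h
    · exact H x ⟨hx.1, h⟩
    · subst h
      rw [← ex3_ends l hs]
      refine (H 0 ⟨le_rfl, Real.pi_pos⟩).congr_fun ?_
      intro k
      congr 1
      have : 2 * I * (k : ℂ) * Real.pi = (k : ℂ) * (2 * Real.pi * I) := by ring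
      rw [this, Complex.exp_int_mul_two_pi_mul_I]
      simp
  intro y hy
  have : Fact (0 < Real.pi) := ⟨Real.pi_pos⟩
  have hcont : Continuous (AddCircle.liftIco Real.pi 0 (ex3F l)) :=
    AddCircle.liftIco_zero_continuous (ex3_ends l hs)
      (Continuous.continuousOn (by unfold ex3F; fun_prop))
  let f : C(AddCircle Real.pi, ℂ) := ⟨_, hcont⟩
  have hfour : ∀ (n : ℤ) (y : ℝ), fourier n (y : AddCircle Real.pi) = exp (2 * I * n * y) := by
    intro n y
    rw [fourier_coe_apply]
    congr 1
    field_simp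
  have step1 : ∀ n : ℤ, fourierCoeff f n = 1 / ((l : ℂ) + n * Real.pi) ^ 2 := by
    intro n
    rw [← ex3_coeff l hs n (hn n)]
    change fourierCoeff (AddCircle.liftIco Real.pi 0 (ex3F l)) n = _
    rw [fourierCoeff_eq_intervalIntegral _ _ 0, zero_add, Complex.real_smul]
    congr 1
    · push_cast; rfl
    · refine intervalIntegral.integral_congr_Ioo_of_le Real.pi_pos.le fun x hx => ?_
      rw [AddCircle.liftIco_coe_apply (by rw [zero_add]; exact Set.Ioo_subset_Ico_self hx),
        hfour, smul_eq_mul]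
      push_cast; rfl
  have step2 := has_pointwise_sum_fourier_series_of_summable
    ((ex3_summable l).congr fun n => (step1 n).symm) (y : AddCircle Real.pi)
  have e : f (y : AddCircle Real.pi) = ex3F l y := by
    change AddCircle.liftIco Real.pi 0 (ex3F l) (y : AddCircle Real.pi) = _
    exact AddCircle.liftIco_coe_apply (show y ∈ Set.Ico 0 (0 + Real.pi) by rw [zero_add]; exact hy)
  rw [e] at step2
  refine step2.congr_fun ?_
  intro k
  rw [step1, hfour, smul_eq_mul]
  ring



/-- **Closed form of the quadratic Fourier series in Example 3.**
For `λ₀ ∈ (-π/2, π/2]`, `λ₀ ≠ 0`, and `x ∈ [-π, π]`: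
`∑_{k∈ℤ} e^{2ikx}/(λ₀+kπ)² = e^{-2iλ₀x/π}((2/π)(-|x| + i x cot λ₀) + 1/sin²λ₀)`,
the series converging absolutely. -/
theorem example3_fourier_series_closed_form
    (lam₀ : ℝ) (hlam₀ : lam₀ ∈ Set.Ioc (-(Real.pi / 2)) (Real.pi / 2)) (hne : lam₀ ≠ 0)
    (x : ℝ) (hx : x ∈ Set.Icc (-Real.pi) Real.pi) :
    Summable (fun k : ℤ =>
      Complex.exp (2 * Complex.I * k * x) / ((lam₀ : ℂ) + k * Real.pi) ^ 2) ∧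
    ∑' k : ℤ, Complex.exp (2 * Complex.I * k * x) / ((lam₀ : ℂ) + k * Real.pi) ^ 2 =
      Complex.exp (-2 * Complex.I * lam₀ * x / Real.pi) *
        ((2 / Real.pi) * (-(|x| : ℝ) +
            Complex.I * x * (Real.cos lam₀ / Real.sin lam₀ : ℝ)) +
          1 / ((Real.sin lam₀ : ℂ)) ^ 2) := by
  have hs : Real.sin lam₀ ≠ 0 := by
    intro h
    have := (Real.sin_eq_zero_iff_of_lt_of_lt (by linarith [hlam₀.1, Real.pi_pos])
      (by linarith [hlam₀.2, Real.pi_pos])).1 h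
    exact hne this
  have hgen : ∀ l : ℝ, Real.sin l ≠ 0 → ∀ n : ℤ, (l : ℂ) + n * Real.pi ≠ 0 := by
    intro l hl n h
    apply hl
    have h' : l + n * Real.pi = 0 := by exact_mod_cast h
    rw [Real.sin_eq_zero_iff]
    exact ⟨-n, by push_cast; linarith⟩
  suffices H : HasSum (fun k : ℤ =>
      Complex.exp (2 * Complex.I * k * x) / ((lam₀ : ℂ) + k * Real.pi) ^ 2)
      (Complex.exp (-2 * Complex.I * lam₀ * x / Real.pi) *
        ((2 / Real.pi) * (-(|x| : ℝ) +
            Complex.I * x * (Real.cos lam₀ / Real.sin lam₀ : ℝ)) +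
          1 / ((Real.sin lam₀ : ℂ)) ^ 2)) from ⟨H.summable, H.tsum_eq⟩
  rcases le_total 0 x with h0 | h0
  · have := ex3_hasSum lam₀ hs (hgen _ hs) x ⟨h0, hx.2⟩
    rw [abs_of_nonneg h0, Complex.ofReal_div]
    exact this
  · have hs2 : Real.sin (-lam₀) ≠ 0 := by rw [Real.sin_neg]; exact neg_ne_zero.2 hs
    have := ex3_hasSum (-lam₀) hs2 (hgen _ hs2) (-x) ⟨by linarith, by linarith [hx.1]⟩
    rw [← (Equiv.neg ℤ).hasSum_iff] at this
    rw [abs_of_nonpos h0, Complex.ofReal_div]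
    convert this using 1
    · funext k
      simp only [Function.comp, Equiv.neg_apply]
      push_cast
      congr 1
      · congr 1; ring
      · ring
    · unfold ex3F
      rw [Real.sin_neg, Real.cos_neg]
      push_cast
      congr 1
      · congr 1; ring
      · rw [div_neg]; ring
end

section
/- Partial-fraction type identity in Example 3: For every λ₀ ∈ (−π/2, π/2] with λ₀ ≠ 0: ∑_{k∈ℤ} 1/((1+(λ₀+kπ)²)·(λ₀+kπ)) = cot λ₀ − sin(2λ₀)/(cosh 2 − cos(2λ₀)), the series converging absolutely. -/
lemma aux_cot_hasSum (w : ℂ) (hw : Complex.sin w ≠ 0) :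
    HasSum (fun n : ℕ => 1 / (w - (n + 1) * Real.pi) + 1 / (w + (n + 1) * Real.pi))
      (Complex.cos w / Complex.sin w - 1 / w) := by
  have hpi : (Real.pi : ℂ) ≠ 0 := by exact_mod_cast Real.pi_ne_zero
  have hx : w / Real.pi ∈ Complex.integerComplement := by
    rintro ⟨k, hk⟩
    apply hw
    rw [Complex.sin_eq_zero_iff]
    exact ⟨k, by rw [hk]; field_simp⟩
  have h1 := (summable_cotTerm hx).hasSum
  have h2 := cot_series_rep' hx
  rw [← h2] at h1
  have h3 := h1.mul_left ((Real.pi : ℂ)⁻¹)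
  have e : (Real.pi : ℂ) * (w / Real.pi) = w := by field_simp
  rw [e] at h3
  have e2 : (Real.pi : ℂ)⁻¹ * (Real.pi * Complex.cot w - 1 / (w / Real.pi))
      = Complex.cos w / Complex.sin w - 1 / w := by
    rw [mul_sub, ← mul_assoc, inv_mul_cancel₀ hpi, Complex.cot, one_mul, one_div_div]
    field_simp
  rw [e2] at h3
  refine h3.congr_fun ?_ 
  intro n
  have a1 : w - (n + 1) * Real.pi = Real.pi * (w / Real.pi - (n + 1)) := by field_simp
  have a2 : w + (n + 1) * Real.pi = Real.pi * (w / Real.pi + (n + 1)) := by field_simp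
  rw [a1, a2, cotTerm]
  simp only [one_div, mul_inv]
  ring

lemma aux_summable (lam : ℝ) :
    Summable (fun k : ℤ =>
      1 / ((1 + (lam + k * Real.pi) ^ 2) * (lam + k * Real.pi))) := by
  have h := ((Real.summable_one_div_int_add_rpow (lam / Real.pi) 3).mpr (by norm_num)).mul_left
    ((Real.pi ^ 3)⁻¹)
  refine h.of_norm_bounded ?_
  intro k
  have hp := Real.pi_pos
  have e : lam + k * Real.pi = Real.pi * (k + lam / Real.pi) := by field_simp; ring
  rw [e]
  set y := (k : ℝ) + lam / Real.pi
  by_cases hy : y = 0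
  · simp [hy]
  have hy' : 0 < |y| := abs_pos.mpr hy
  have e3 : |y| ^ (3 : ℝ) = |y| ^ 3 := by norm_cast
  rw [e3, Real.norm_eq_abs, abs_div, abs_mul, abs_mul, abs_one, abs_of_pos hp,
    abs_of_pos (by positivity : 0 < 1 + (Real.pi * y) ^ 2), inv_mul_eq_div, div_div, mul_comm (|y| ^ 3)]
  apply one_div_le_one_div_of_le (by positivity)
  have : y ^ 2 = |y| ^ 2 := (sq_abs y).symm
  rw [mul_pow, this]
  have : 0 < Real.pi * |y| := by positivity
  nlinarith

lemma aux_pf (w : ℂ) (h0 : w ≠ 0) (h1 : w + Complex.I ≠ 0) (h2 : w - Complex.I ≠ 0) :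
    1 / ((1 + w ^ 2) * w) = 1 / w - (1 / 2) * (1 / (w + Complex.I) + 1 / (w - Complex.I)) := by
  have e : 1 + w ^ 2 = (w + Complex.I) * (w - Complex.I) := by
    ring_nf; rw [Complex.I_sq]; ring
  rw [e]
  field_simp
  ring_nf
  try rw [Complex.I_sq]
  try ring

/-- **Partial-fraction type identity in Example 3.**
For `λ₀ ∈ (-π/2, π/2]`, `λ₀ ≠ 0`:
`∑_{k∈ℤ} 1/((1+(λ₀+kπ)²)(λ₀+kπ)) = cot λ₀ - sin(2λ₀)/(cosh 2 - cos(2λ₀))`,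
the series converging absolutely. -/
theorem example3_partial_fraction_identity
    (lam₀ : ℝ) (hlam₀ : lam₀ ∈ Set.Ioc (-(Real.pi / 2)) (Real.pi / 2)) (hne : lam₀ ≠ 0) :
    Summable (fun k : ℤ =>
      1 / ((1 + (lam₀ + k * Real.pi) ^ 2) * (lam₀ + k * Real.pi))) ∧
    ∑' k : ℤ, 1 / ((1 + (lam₀ + k * Real.pi) ^ 2) * (lam₀ + k * Real.pi)) =
      Real.cos lam₀ / Real.sin lam₀ -
        Real.sin (2 * lam₀) / (Real.cosh 2 - Real.cos (2 * lam₀)) := by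
  have hS := aux_summable lam₀
  refine ⟨hS, ?_⟩
  have hp := Real.pi_pos
  have hsin : Real.sin lam₀ ≠ 0 := by
    intro h
    exact hne ((Real.sin_eq_zero_iff_of_lt_of_lt (by linarith [hlam₀.1]) (by linarith [hlam₀.2])).1 h)
  have hx0 : ∀ k : ℤ, (lam₀ : ℂ) + k * Real.pi ≠ 0 := by
    intro k hk
    have hk' : lam₀ + k * Real.pi = 0 := by exact_mod_cast hk
    apply hsin
    rw [Real.sin_eq_zero_iff]
    exact ⟨-k, by push_cast; linarith⟩
  have hx1 : ∀ k : ℤ, (lam₀ : ℂ) + k * Real.pi + Complex.I ≠ 0 := by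
    intro k hk
    simpa using congrArg Complex.im hk
  have hx2 : ∀ k : ℤ, (lam₀ : ℂ) + k * Real.pi - Complex.I ≠ 0 := by
    intro k hk
    simpa using congrArg Complex.im hk
  have s0 : Complex.sin lam₀ ≠ 0 := by
    rw [← Complex.ofReal_sin]; exact_mod_cast hsin
  have s1 : Complex.sin (lam₀ + Complex.I) ≠ 0 := by
    rw [Ne, Complex.sin_eq_zero_iff]
    rintro ⟨k, hk⟩
    simpa using congrArg Complex.im hk
  have s2 : Complex.sin (lam₀ - Complex.I) ≠ 0 := by
    rw [Ne, Complex.sin_eq_zero_iff]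
    rintro ⟨k, hk⟩
    simpa using congrArg Complex.im hk
  have H := (aux_cot_hasSum _ s0).sub
    (((aux_cot_hasSum _ s1).add (aux_cot_hasSum _ s2)).mul_left (1 / 2))
  have hC := (Complex.hasSum_ofReal.mpr hS.hasSum).nat_add_neg
  rw [← hasSum_nat_add_iff' 1] at hC
  have hU := hC.unique (H.congr_fun (fun n => by
    have p := aux_pf _ (hx0 (n + 1)) (hx1 (n + 1)) (hx2 (n + 1))
    have q := aux_pf _ (hx0 (-(n + 1))) (hx1 (-(n + 1))) (hx2 (-(n + 1)))
    push_cast at p q ⊢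
    rw [p, q]
    ring_nf))
  have p0 := aux_pf _ (hx0 0) (hx1 0) (hx2 0)
  simp only [Int.cast_zero, zero_mul, add_zero] at p0
  simp only [Finset.range_one, Finset.sum_singleton] at hU
  push_cast at hU
  simp only [Int.cast_zero, neg_zero, zero_mul, add_zero] at hU
  rw [p0] at hU
  have key : (1 / 2 : ℂ) * (Complex.cos (lam₀ + Complex.I) / Complex.sin (lam₀ + Complex.I)
      + Complex.cos (lam₀ - Complex.I) / Complex.sin (lam₀ - Complex.I)) =
      Complex.sin (2 * lam₀) / (Complex.cosh 2 - Complex.cos (2 * lam₀)) := by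
    have t1 : Complex.sin (2 * lam₀) =
        Complex.sin (lam₀ + Complex.I) * Complex.cos (lam₀ - Complex.I) +
        Complex.cos (lam₀ + Complex.I) * Complex.sin (lam₀ - Complex.I) := by
      rw [← Complex.sin_add]; ring_nf
    have t2 : Complex.cosh 2 - Complex.cos (2 * lam₀) =
        2 * (Complex.sin (lam₀ + Complex.I) * Complex.sin (lam₀ - Complex.I)) := by
      have u1 := Complex.cos_add (lam₀ + Complex.I) (lam₀ - Complex.I)
      have u2 := Complex.cos_sub (lam₀ + Complex.I) (lam₀ - Complex.I)
      have v1 : (lam₀ + Complex.I) + (lam₀ - Complex.I) = 2 * lam₀ := by ring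
      have v2 : (lam₀ + Complex.I) - (lam₀ - Complex.I) = 2 * Complex.I := by ring
      rw [v1] at u1
      rw [v2, Complex.cos_mul_I] at u2
      rw [u1, u2]; ring
    rw [t1, t2]
    field_simp
    ring
  have fin : ((∑' k : ℤ, 1 / ((1 + (lam₀ + k * Real.pi) ^ 2) * (lam₀ + k * Real.pi)) : ℝ) : ℂ) =
      ((Real.cos lam₀ / Real.sin lam₀ -
        Real.sin (2 * lam₀) / (Real.cosh 2 - Real.cos (2 * lam₀)) : ℝ) : ℂ) := by
    push_cast
    rw [← key]
    linear_combination hU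
  exact_mod_cast fin
end

section
/- The screw functions in Example 3 are piecewise linear: Let λ₀ ∈ (−π/2, π/2] with λ₀ ≠ 0 and set β := −sin(2λ₀)/(cosh 2 − cos(2λ₀)). Then for every t ∈ [−2, 2]: iβt + ∑_{k∈ℤ} ( e^{i(λ₀+kπ)t} − 1 − i(λ₀+kπ)t/(1+(λ₀+kπ)²) ) / (λ₀+kπ)² = −|t|. -/
open Complex in
lemma aux_cot (z : ℂ) (hz : z / Real.pi ∈ Complex.integerComplement) :
    HasSum (fun n : ℕ => 1 / (z - (n + 1) * Real.pi) + 1 / (z + (n + 1) * Real.pi))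
      (Complex.cot z - 1 / z) := by
  have hpi : (Real.pi : ℂ) ≠ 0 := by exact_mod_cast Real.pi_ne_zero
  have h1 := (summable_cotTerm hz).hasSum
  have h2 := cot_series_rep' hz
  unfold cotTerm at h1
  rw [← h2] at h1
  have h3 := h1.mul_left (1 / (Real.pi : ℂ))
  rw [mul_div_cancel₀ _ hpi] at h3
  have hz0 : z ≠ 0 := by
    rintro rfl
    exact hz ⟨0, by simp⟩
  have hv : Complex.cot z - 1 / z =
      1 / ↑Real.pi * (↑Real.pi * z.cot - 1 / (z / ↑Real.pi)) := by
    field_simp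
  rw [hv]
  refine h3.congr_fun fun n => ?_
  · rw [mul_add, one_div_mul_one_div, one_div_mul_one_div, mul_sub, mul_add _ (z / (Real.pi : ℂ)),
      mul_div_cancel₀ _ hpi,
      mul_comm (Real.pi : ℂ) ((n : ℂ) + 1)]

lemma aux_sum_inv_sq (l : ℝ) : Summable (fun k : ℤ => ‖1 / ((l : ℂ) + k * Real.pi) ^ 2‖) := by
  have h := ((Real.summable_one_div_int_add_rpow (l / Real.pi) 2).mpr (by norm_num)).mul_left
    (1 / Real.pi ^ 2)
  refine h.congr fun k => ?_
  have : (l : ℂ) + k * Real.pi = ((l + k * Real.pi : ℝ) : ℂ) := by push_cast; rfl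
  rw [this, norm_div, norm_pow, Complex.norm_real, norm_one, Real.norm_eq_abs, sq_abs]
  rw [show (2 : ℝ) = ((2 : ℕ) : ℝ) by norm_num, Real.rpow_natCast, sq_abs]
  rw [one_div_mul_one_div, ← mul_pow, mul_add, mul_div_cancel₀ _ Real.pi_ne_zero]
  ring

lemma aux_mu_ne (l : ℝ) (hs : Real.sin l ≠ 0) (k : ℤ) : l + k * Real.pi ≠ 0 := by
  intro h
  apply hs
  rw [Real.sin_eq_zero_iff]
  exact ⟨-k, by push_cast; linarith⟩

lemma aux_mu_neC (l : ℝ) (hs : Real.sin l ≠ 0) (k : ℤ) : (l : ℂ) + k * Real.pi ≠ 0 := by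
  have := aux_mu_ne l hs k
  exact_mod_cast this

lemma aux_mem (z : ℂ) (hs : Complex.sin z ≠ 0) : z / Real.pi ∈ Complex.integerComplement := by
  rintro ⟨n, hn⟩
  have hpi : (Real.pi : ℂ) ≠ 0 := by exact_mod_cast Real.pi_ne_zero
  apply hs
  rw [Complex.sin_eq_zero_iff]
  exact ⟨n, by rw [hn]; field_simp⟩

lemma aux_one_add_sq (l : ℝ) (k : ℤ) : 1 + ((l : ℂ) + k * Real.pi) ^ 2 ≠ 0 := by
  have : 1 + (l + k * Real.pi) ^ 2 ≠ 0 := by positivity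
  exact_mod_cast this

lemma aux_summable3 (l : ℝ) : Summable (fun k : ℤ =>
    1 / (((l : ℂ) + k * Real.pi) * (1 + ((l : ℂ) + k * Real.pi) ^ 2))) := by
  refine (aux_sum_inv_sq l).of_norm_bounded fun k => ?_
  have : (l : ℂ) + k * Real.pi = ((l + k * Real.pi : ℝ) : ℂ) := by push_cast; rfl
  rw [this]
  generalize l + k * Real.pi = m
  have e : 1 / ((m : ℂ) * (1 + (m : ℂ) ^ 2)) = ((1 / (m * (1 + m ^ 2)) : ℝ) : ℂ) := by push_cast; rfl
  have e2 : 1 / (m : ℂ) ^ 2 = ((1 / m ^ 2 : ℝ) : ℂ) := by push_cast; rfl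
  rw [e, e2, Complex.norm_real, Complex.norm_real, Real.norm_eq_abs, Real.norm_eq_abs]
  by_cases hm : m = 0
  · simp [hm]
  rw [abs_div, abs_div, abs_one, abs_mul, abs_of_pos (by positivity : 0 < 1 + m ^ 2), abs_pow]
  have : 0 < |m| := abs_pos.mpr hm
  apply one_div_le_one_div_of_le (by positivity)
  rw [← sq_abs m]
  nlinarith [sq_nonneg (|m| - 1)]

lemma aux_cosh2 : 1 < Real.cosh 2 := Real.one_lt_cosh.mpr (by norm_num)

lemma aux_sinsin (l : ℝ) : Complex.sin (l + Complex.I) * Complex.sin (l - Complex.I) =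
    ((Real.cosh 2 - Real.cos (2 * l) : ℝ) : ℂ) / 2 := by
  push_cast
  have h1 : Complex.cosh 2 = Complex.cos (2 * Complex.I) := by rw [Complex.cos_mul_I]
  rw [h1, Complex.sin_add, Complex.sin_sub, Complex.cos_two_mul, Complex.cos_two_mul]
  linear_combination ((Complex.cos Complex.I)^2) * Complex.sin_sq_add_cos_sq (l:ℂ) 
    - (Complex.cos l)^2 * Complex.sin_sq_add_cos_sq Complex.I

lemma aux_sum3 (l : ℝ) (hs : Real.sin l ≠ 0) : 
    ∑' k : ℤ, 1 / (((l : ℂ) + k * Real.pi) * (1 + ((l : ℂ) + k * Real.pi) ^ 2)) =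
      Complex.cot l - ((Real.sin (2 * l) / (Real.cosh 2 - Real.cos (2 * l)) : ℝ) : ℂ) := by
  have hD : 0 < Real.cosh 2 - Real.cos (2 * l) := by
    linarith [aux_cosh2, Real.cos_le_one (2 * l)]
  have hDC : ((Real.cosh 2 - Real.cos (2 * l) : ℝ) : ℂ) ≠ 0 := by exact_mod_cast hD.ne'
  have hss := aux_sinsin l
  have hp : Complex.sin (l + Complex.I) ≠ 0 := by
    intro h; rw [h, zero_mul] at hss; apply hDC; linear_combination -2 * hss
  have hm : Complex.sin (l - Complex.I) ≠ 0 := by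
    intro h; rw [h, mul_zero] at hss; apply hDC; linear_combination -2 * hss
  have hsC : Complex.sin l ≠ 0 := by exact_mod_cast hs
  have c0 := aux_cot l (aux_mem _ hsC)
  have c1 := aux_cot _ (aux_mem _ hp)
  have c2 := aux_cot _ (aux_mem _ hm)
  have key : ∀ k : ℤ, 1 / (((l : ℂ) + k * Real.pi) * (1 + ((l : ℂ) + k * Real.pi) ^ 2)) =
      1 / ((l : ℂ) + k * Real.pi) - 1 / 2 * (1 / ((l : ℂ) + Complex.I + k * Real.pi) +
        1 / ((l : ℂ) - Complex.I + k * Real.pi)) := by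
    intro k
    have h0 := aux_mu_neC l hs k
    have h1 := aux_one_add_sq l k
    rw [show (l : ℂ) + Complex.I + k * Real.pi = ((l : ℂ) + k * Real.pi) + Complex.I by ring,
      show (l : ℂ) - Complex.I + k * Real.pi = ((l : ℂ) + k * Real.pi) - Complex.I by ring]
    generalize (l : ℂ) + k * Real.pi = m at *
    have hf : (m + Complex.I) * (m - Complex.I) = 1 + m ^ 2 := by
      linear_combination -Complex.I_sq
    have ha : m + Complex.I ≠ 0 := fun h => h1 (by rw [← hf, h, zero_mul])
    have hb : m - Complex.I ≠ 0 := fun h => h1 (by rw [← hf, h, mul_zero])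
    rw [← hf]
    field_simp
    linear_combination 2 * Complex.I_sq
  set F : ℤ → ℂ := fun k => 1 / (((l : ℂ) + k * Real.pi) * (1 + ((l : ℂ) + k * Real.pi) ^ 2))
    with hF
  have hsum : HasSum F (∑' k, F k) := (aux_summable3 l).hasSum
  have hn := hsum.nat_add_neg
  rw [← hasSum_nat_add_iff' 1] at hn
  have hc := c0.sub ((c1.add c2).mul_left (1 / 2))
  have heq := hn.unique (hc.congr_fun ?_)
  · have k0 := key 0
    have hF0 : F 0 = 1 / l - 1 / 2 * (1 / (l + Complex.I) + 1 / (l - Complex.I)) := by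
      rw [hF]; simpa using k0
    simp only [Finset.sum_range_one, Nat.cast_zero, neg_zero] at heq
    have hcc : 1 / 2 * (Complex.cot (l + Complex.I) + Complex.cot (l - Complex.I)) = 
        ((Real.sin (2 * l) / (Real.cosh 2 - Real.cos (2 * l)) : ℝ) : ℂ) := by
      rw [Complex.cot, Complex.cot, div_add_div _ _ hp hm, hss, Complex.ofReal_div]
      have : Complex.cos (l + Complex.I) * Complex.sin (l - Complex.I) + 
         Complex.sin (l + Complex.I) * Complex.cos (l - Complex.I) = (Real.sin (2 * l) : ℝ) := by
        rw [add_comm, ← Complex.sin_add]; push_cast; congr 1; ring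
      rw [this]
      field_simp
    rw [← hcc]
    have heq' : ∑' k, F k = ∑' k, F k + F 0 - (F 0 + F 0) + F 0 := by ring
    rw [heq', heq, hF0]; ring
  · intro n
    have a1 := key ((n + 1 : ℕ) : ℤ)
    have a2 := key (-((n + 1 : ℕ) : ℤ))
    simp only [hF]
    rw [a1, a2]
    push_cast
    simp only [neg_mul, sub_eq_add_neg]
    ring

lemma aux_fourier (l : ℝ) (hs : Real.sin l ≠ 0) (t : ℝ) (ht : t ∈ Set.Icc (0 : ℝ) 2) :
    HasSum (fun k : ℤ => Complex.exp (Complex.I * ((l : ℂ) + k * Real.pi) * t) /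
        ((l : ℂ) + k * Real.pi) ^ 2)
      (1 / Complex.sin l ^ 2 + (Complex.I * Complex.exp (Complex.I * l) / Complex.sin l) * t) := by
  have hsC : Complex.sin l ≠ 0 := by exact_mod_cast hs
  have hes : Complex.exp (Complex.I * l) = Complex.cos l + Complex.sin l * Complex.I := by
    rw [mul_comm, Complex.exp_mul_I]
  have hes2 : Complex.exp (-(2 * Complex.I * l)) = (Complex.cos l - Complex.sin l * Complex.I) ^ 2 := by
    rw [show -(2 * Complex.I * l) = ((2 : ℕ) : ℂ) * ((-l) * Complex.I) by push_cast; ring, Complex.exp_nat_mul,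
      Complex.exp_mul_I, Complex.cos_neg, Complex.sin_neg]
    ring
  have htr := Complex.sin_sq_add_cos_sq (l : ℂ)
  set a : ℂ := 1 / Complex.sin l ^ 2 with ha
  set b : ℂ := Complex.I * Complex.exp (Complex.I * l) / Complex.sin l with hb
  have hab : Complex.exp (-(2 * Complex.I * l)) * (a + b * 2) = a := by
    rw [hes2, ha, hb, hes]
    field_simp
    generalize Complex.sin (l : ℂ) = s at *
    generalize Complex.cos (l : ℂ) = c at *
    have hI := Complex.I_sq
    generalize Complex.I = i at *
    have hq : (c - s * i) * (c + s * i) = 1 := by linear_combination htr - s ^ 2 * hI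
    linear_combination hq * ((c - s * i) * (c + s * i) + 1 - (c - s * i) ^ 2)
  have hb2 : b * (Complex.exp (-(2 * Complex.I * l)) - 1) = 2 := by
    rw [hes2, hb, hes]
    field_simp
    generalize Complex.sin (l : ℂ) = s at *
    generalize Complex.cos (l : ℂ) = c at *
    have hI := Complex.I_sq
    generalize Complex.I = i at *
    have hq : (c - s * i) * (c + s * i) = 1 := by linear_combination htr - s ^ 2 * hI
    linear_combination i * (c - s * i) * hq - 2 * s * hI
  have : Fact (0 < (2 : ℝ)) := ⟨by norm_num⟩
  set f : ℝ → ℂ := fun x => Complex.exp (-(Complex.I * l * x)) * (a + b * x) with hf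
  have hper : f 0 = f (0 + 2) := by
    simp only [hf]
    have hx : -(Complex.I * l * ((0 + 2 : ℝ) : ℂ)) = -(2 * Complex.I * l) := by push_cast; ring
    rw [hx]
    simpa using hab.symm
  let g : C(AddCircle (2 : ℝ), ℂ) := ⟨AddCircle.liftIco 2 0 f, AddCircle.liftIco_continuous hper
    (by fun_prop)⟩
  have hcoef : ∀ k : ℤ, fourierCoeff g k = 1 / ((l : ℂ) + k * Real.pi) ^ 2 := by
    intro k
    have h0 := aux_mu_neC l hs k
    change fourierCoeff (AddCircle.liftIco 2 0 f) k = _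
    rw [fourierCoeff_liftIco_eq, fourierCoeffOn_eq_integral]
    have hint : ∀ x : ℝ, (fourier (-k) (x : AddCircle ((0 + 2 : ℝ) - 0)) • f x) = 
        Complex.exp (-(Complex.I * ((l : ℂ) + k * Real.pi) * x)) * (a + b * x) := by
      intro x
      rw [fourier_coe_apply, smul_eq_mul, hf]
      simp only []
      rw [← mul_assoc, ← Complex.exp_add]
      congr 2
      push_cast
      ring
    simp_rw [hint]
    set m : ℂ := (l : ℂ) + k * Real.pi with hm
    have hder : ∀ x : ℝ, HasDerivAt (fun x : ℝ => Complex.exp (-(Complex.I * m * x)) * 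
        ((a + b * x) * (Complex.I / m) + b / m ^ 2)) 
        (Complex.exp (-(Complex.I * m * x)) * (a + b * x)) x := by
      intro x
      have e1 : HasDerivAt (fun x : ℝ => (x : ℂ)) 1 x := Complex.ofRealCLM.hasDerivAt
      have e2 := ((e1.const_mul (Complex.I * m)).neg).cexp
      have e3 := (((e1.const_mul b).const_add a).mul_const (Complex.I / m)).add_const (b / m ^ 2)
      refine (e2.mul e3).congr_deriv ?_
      field_simp
      generalize Complex.exp _ = E
      have hI := Complex.I_sq
      linear_combination (-(m * (a + b * x) * E)) * hI
    rw [intervalIntegral.integral_eq_sub_of_hasDerivAt (fun x _ => hder x)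
      (by apply Continuous.intervalIntegrable; fun_prop)]
    have hexp : Complex.exp (-(Complex.I * m * 2)) = Complex.exp (-(2 * Complex.I * l)) := by
      rw [Complex.exp_eq_exp_iff_exists_int]
      exact ⟨-k, by rw [hm]; push_cast; ring⟩
    norm_num
    rw [hexp]
    field_simp
    linear_combination Complex.I * m * hab + hb2
  have hsumm : Summable (fourierCoeff g) := by
    refine Summable.of_norm ?_
    simp_rw [hcoef]
    exact aux_sum_inv_sq l
  have hfin := (has_pointwise_sum_fourier_series_of_summable hsumm (t : AddCircle (2:ℝ))).mul_left
    (Complex.exp (Complex.I * l * t))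
  have hgt : g (t : AddCircle (2 : ℝ)) = f t := by
    change AddCircle.liftIco 2 0 f t = _
    rcases eq_or_lt_of_le ht.2 with h | h
    · have : (t : AddCircle (2 : ℝ)) = ((0 : ℝ) : AddCircle (2 : ℝ)) := by
        rw [h, AddCircle.coe_period]; simp
      rw [this, AddCircle.liftIco_coe_apply (by constructor <;> norm_num), hper, h, zero_add]
    · exact AddCircle.liftIco_coe_apply ⟨ht.1, by linarith⟩
  rw [hgt] at hfin
  have hv : a + b * t = Complex.exp (Complex.I * l * t) * f t := by
    rw [hf]
    simp only []
    rw [← mul_assoc, ← Complex.exp_add]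
    simp
  rw [hv]
  refine hfin.congr_fun fun k => ?_
  · rw [hcoef, fourier_coe_apply, smul_eq_mul, mul_left_comm, ← Complex.exp_add, div_eq_mul_one_div, mul_comm]
    congr 2
    push_cast
    ring

lemma aux_fourier2 (l : ℝ) (hs : Real.sin l ≠ 0) (t : ℝ) (ht : t ∈ Set.Icc (-2 : ℝ) 2) :
    HasSum (fun k : ℤ => Complex.exp (Complex.I * ((l : ℂ) + k * Real.pi) * t) /
        ((l : ℂ) + k * Real.pi) ^ 2)
      (1 / Complex.sin l ^ 2 + Complex.I * Complex.cot l * t - (|t| : ℝ)) := by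
  have hsC : Complex.sin l ≠ 0 := by exact_mod_cast hs
  have hes : Complex.exp (Complex.I * l) = Complex.cos l + Complex.sin l * Complex.I := by
    rw [mul_comm, Complex.exp_mul_I]
  have hI := Complex.I_sq
  rcases le_total 0 t with h | h
  · have := aux_fourier l hs t ⟨h, ht.2⟩
    rw [abs_of_nonneg h]
    convert! this using 1
    rw [hes, Complex.cot]
    field_simp
    linear_combination (-(Complex.sin l ^ 2 * t)) * hI
  · have h2 := (aux_fourier l hs (t + 2) ⟨by linarith [ht.1], by linarith⟩).mul_left
      (Complex.exp (-(2 * Complex.I * l)))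
    have hes2 : Complex.exp (-(2 * Complex.I * l)) =
        (Complex.cos l - Complex.sin l * Complex.I) ^ 2 := by
      rw [show -(2 * Complex.I * l) = ((2 : ℕ) : ℂ) * ((-l) * Complex.I) by push_cast; ring,
        Complex.exp_nat_mul, Complex.exp_mul_I, Complex.cos_neg, Complex.sin_neg]
      ring
    have htr := Complex.sin_sq_add_cos_sq (l : ℂ)
    rw [abs_of_nonpos h]
    have hv : 1 / Complex.sin l ^ 2 + Complex.I * Complex.cot l * t - ((-t : ℝ) : ℂ) =
        Complex.exp (-(2 * Complex.I * l)) * (1 / Complex.sin l ^ 2 +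
          (Complex.I * Complex.exp (Complex.I * l) / Complex.sin l) * ((t + 2 : ℝ) : ℂ)) := by
      rw [hes2, hes, Complex.cot]
      push_cast
      field_simp
      generalize Complex.sin (l : ℂ) = s at *
      generalize Complex.cos (l : ℂ) = c at *
      generalize Complex.I = i at *
      have hq : (c - s * i) * (c + s * i) = 1 := by linear_combination htr - s ^ 2 * hI
      linear_combination (-1) * hq * ((c - s * i) * (c + s * i) + 1 - (c - s * i) ^ 2)
        - i * s * t * (c - s * i) * hq + s ^ 2 * t * hI
    rw [hv]
    refine h2.congr_fun fun k => ?_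
    rw [← mul_div_assoc, ← Complex.exp_add]
    congr 1
    rw [Complex.exp_eq_exp_iff_exists_int]
    exact ⟨-k, by push_cast; ring⟩

/-- **The screw functions in Example 3 are piecewise linear.**
For `λ₀ ∈ (-π/2, π/2]`, `λ₀ ≠ 0`, `β = -sin(2λ₀)/(cosh 2 - cos(2λ₀))` and `t ∈ [-2,2]`:
`iβt + ∑_{k∈ℤ} (e^{i(λ₀+kπ)t} - 1 - i(λ₀+kπ)t/(1+(λ₀+kπ)²))/(λ₀+kπ)² = -|t|`,
the series converging absolutely. -/
theorem example3_screw_function_piecewise_linear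
    (lam₀ : ℝ) (hlam₀ : lam₀ ∈ Set.Ioc (-(Real.pi / 2)) (Real.pi / 2)) (hne : lam₀ ≠ 0)
    (β : ℝ) (hβ : β = -(Real.sin (2 * lam₀) / (Real.cosh 2 - Real.cos (2 * lam₀))))
    (t : ℝ) (ht : t ∈ Set.Icc (-2 : ℝ) 2) :
    Summable (fun k : ℤ =>
      (Complex.exp (Complex.I * ((lam₀ : ℂ) + k * Real.pi) * t) - 1 -
          Complex.I * ((lam₀ : ℂ) + k * Real.pi) * t /
            (1 + ((lam₀ : ℂ) + k * Real.pi) ^ 2)) /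
        ((lam₀ : ℂ) + k * Real.pi) ^ 2) ∧
    Complex.I * β * t +
        ∑' k : ℤ,
          (Complex.exp (Complex.I * ((lam₀ : ℂ) + k * Real.pi) * t) - 1 -
              Complex.I * ((lam₀ : ℂ) + k * Real.pi) * t /
                (1 + ((lam₀ : ℂ) + k * Real.pi) ^ 2)) /
            ((lam₀ : ℂ) + k * Real.pi) ^ 2 =
      -(|t| : ℝ) := by
  have hpi := Real.pi_pos
  have hs : Real.sin lam₀ ≠ 0 := by
    intro h
    exact hne ((Real.sin_eq_zero_iff_of_lt_of_lt (by linarith [hlam₀.1])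
      (by linarith [hlam₀.2])).mp h)
  have h1 := aux_fourier2 lam₀ hs t ht
  have h2 := aux_fourier2 lam₀ hs 0 (by constructor <;> norm_num)
  have h3 := (aux_summable3 lam₀).hasSum.mul_left (Complex.I * t)
  rw [aux_sum3 lam₀ hs] at h3
  have h4 := (h1.sub h2).sub h3
  have h5 := h4.congr_fun (g := fun k : ℤ =>
      (Complex.exp (Complex.I * ((lam₀ : ℂ) + k * Real.pi) * t) - 1 -
          Complex.I * ((lam₀ : ℂ) + k * Real.pi) * t /
            (1 + ((lam₀ : ℂ) + k * Real.pi) ^ 2)) /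
        ((lam₀ : ℂ) + k * Real.pi) ^ 2) (fun k => by
    have a1 := aux_mu_neC lam₀ hs k
    have a2 := aux_one_add_sq lam₀ k
    simp only [Complex.ofReal_zero, mul_zero, Complex.exp_zero]
    field_simp)
  refine ⟨h5.summable, ?_⟩
  rw [h5.tsum_eq, hβ]
  simp only [abs_zero, Complex.ofReal_zero, Complex.ofReal_neg]
  ring
end
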